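/- arXiv:2509.26237 — 5 statements merged into one kernel-verified Lean document; each statement's English description precedes it below -/
import Mathlib

section
/- Let K be a field and n ≥ 2, where additionally n ≥ 3 if K has exactly two elements. Let A, B ∈ GL(n, K) be cyclic matrices. Let X ∈ GL(n−1, K) and δ ∈ K with δ ≠ 0, such that δ is not an eigenvalue of X (i.e., X − δ·Iₙ₋₁ is invertible) and det X · δ = det A · det B. Then the block diagonal matrix M = X ⊕ δ (the n×n matrix with blocks X and the 1×1 block δ on the diagonal) can be written as M = (S A S⁻¹) · (T B T⁻¹) for some S, T ∈ GL(n, K). -/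
open Matrix Polynomial

noncomputable section

/-- A matrix is cyclic if its characteristic polynomial equals its minimal polynomial. -/
def IsCyclicMat {ι : Type*} [Fintype ι] [DecidableEq ι] {K : Type*} [Field K]
    (A : Matrix ι ι K) : Prop :=
  A.charpoly = minpoly K A

/-- A matrix is nonprimary if its characteristic polynomial is a product of two
coprime nonconstant monic polynomials. -/
def IsNonprimary {ι : Type*} [Fintype ι] [DecidableEq ι] {K : Type*} [Field K]
    (M : Matrix ι ι K) : Prop :=
  ∃ f g : Polynomial K, f.Monic ∧ g.Monic ∧ 0 < f.natDegree ∧ 0 < g.natDegree ∧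
    IsCoprime f g ∧ M.charpoly = f * g

/-- A transvection: `T ≠ 1`, `(T - 1)² = 0` and `rank (T - 1) = 1`. -/
def IsTransvection {ι : Type*} [Fintype ι] [DecidableEq ι] {K : Type*} [Field K]
    (T : Matrix ι ι K) : Prop :=
  T ≠ 1 ∧ (T - 1) * (T - 1) = 0 ∧ (T - 1).rank = 1

/-- A matrix has a vector whose annihilating polynomial is the minimal polynomial. -/
lemma exists_cyclic_vec {K : Type*} [Field K] {n : ℕ} (A : Matrix (Fin n) (Fin n) K) :
    ∃ u : Fin n → K, ∀ f : K[X], (aeval A f) *ᵥ u = 0 → minpoly K A ∣ f := by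
  obtain ⟨x, hx⟩ := Module.exists_ker_toSpanSingleton_eq_annihilator K[X]
    (Module.AEval' (Matrix.toLin' A))
  obtain ⟨x, rfl⟩ := (Module.AEval'.of _).surjective x
  refine ⟨x, fun f hf => ?_⟩
  rw [← span_minpoly_eq_annihilator, Matrix.minpoly_toLin'] at hx
  rw [← Ideal.mem_span_singleton, ← hx, LinearMap.mem_ker, LinearMap.toSpanSingleton_apply]
  change f • (Module.AEval.of K (Fin n → K) (Matrix.toLin' A)) x = 0
  rw [← Module.AEval.of_aeval_smul]
  have h : aeval (Matrix.toLin' A) f = Matrix.toLin' (aeval A f) := by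
    have := Polynomial.aeval_algHom_apply (Matrix.toLinAlgEquiv' (R := K) (n := Fin n)).toAlgHom A f
    exact this
  rw [h]
  change (Module.AEval.of K (Fin n → K) (Matrix.toLin' A)) ((toLin' (aeval A f)) x) = 0
  rw [Matrix.toLin'_apply, hf, map_zero]

/-- The polynomials expressing a Hessenberg basis through the Krylov basis. -/
def hessSeq {K : Type*} [Field K] (V : ℕ → ℕ → K) : ℕ → K[X]
  | 0 => 1
  | j + 1 => C (V j j)⁻¹ * (X * hessSeq V j - ∑ i : Fin j, C (V i j) * hessSeq V (i + 1))
termination_by j => j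
decreasing_by all_goals omega

lemma hessSeq_rel {K : Type*} [Field K] (V : ℕ → ℕ → K) (hV : ∀ j, V j j ≠ 0) (j : ℕ) :
    X * hessSeq V j = ∑ i ∈ Finset.range (j + 1), C (V i j) * hessSeq V (i + 1) := by
  rw [Finset.sum_range_succ, hessSeq, ← mul_assoc, ← C_mul, mul_inv_cancel₀ (hV j), C_1, one_mul,
    Finset.sum_range (fun i => C (V i j) * hessSeq V (i + 1))]
  ring

lemma hessSeq_degree {K : Type*} [Field K] (V : ℕ → ℕ → K) (hV : ∀ j, V j j ≠ 0) (j : ℕ) :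
    (hessSeq V j).degree = j := by
  induction j using Nat.strong_induction_on with
  | _ j ih =>
    cases j with
    | zero => simp [hessSeq]
    | succ j =>
      rw [hessSeq, degree_C_mul (inv_ne_zero (hV j))]
      have h1 : (X * hessSeq V j).degree = ((j + 1 : ℕ) : WithBot ℕ) := by
        rw [degree_mul, degree_X, ih j (by omega), add_comm]; norm_cast
      rw [degree_sub_eq_left_of_degree_lt, h1]
      rw [h1]
      refine lt_of_le_of_lt (degree_sum_le _ _) ?_
      rw [Finset.sup_lt_iff (by exact WithBot.bot_lt_coe _)]
      intro i _
      rw [← smul_eq_C_mul]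
      refine lt_of_le_of_lt (degree_smul_le _ _) ?_
      rw [ih (i + 1) (by omega)]
      have := i.2
      exact_mod_cast (by omega : (i : ℕ) + 1 < j + 1)

/-- A cyclic matrix is similar to an upper Hessenberg matrix whose lower left block is a
prescribed invertible upper triangular matrix. -/
lemma exists_hess {K : Type*} [Field K] {m : ℕ} (A : Matrix (Fin (m + 1)) (Fin (m + 1)) K)
    (hA : IsCyclicMat A) (U : Matrix (Fin m) (Fin m) K) (hU : ∀ i j, j < i → U i j = 0)
    (hU' : ∀ i, U i i ≠ 0) :
    ∃ S F : Matrix (Fin (m + 1)) (Fin (m + 1)) K, IsUnit S ∧ A * S = S * F ∧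
      (∀ i j : Fin m, F i.succ j.castSucc = U i j) ∧ ∀ j : Fin m, F 0 j.castSucc = 0 := by
  obtain ⟨u, hu⟩ := exists_cyclic_vec A
  rw [← hA] at hu
  let V : ℕ → ℕ → K := fun i j =>
    if h : i < m ∧ j < m then U ⟨i, h.1⟩ ⟨j, h.2⟩ else if i = j then 1 else 0
  have hV : ∀ j, V j j ≠ 0 := by
    intro j
    by_cases h : j < m
    · simpa [V, h] using hU' _
    · simp [V, h]
  let S : Matrix (Fin (m + 1)) (Fin (m + 1)) K :=
    Matrix.of fun k j => ((aeval A (hessSeq V j)) *ᵥ u) k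
  have hS : IsUnit S := by
    rw [← Matrix.linearIndependent_cols_iff_isUnit, Fintype.linearIndependent_iff]
    intro g hg
    have e1 : aeval A (∑ i, C (g i) * hessSeq V (i : Fin (m + 1))) *ᵥ u = 0 := by
      rw [map_sum, Matrix.sum_mulVec, ← hg]
      refine Finset.sum_congr rfl fun i _ => ?_
      rw [← smul_eq_C_mul, map_smul, Matrix.smul_mulVec]
      rfl
    have e2 : (∑ i, C (g i) * hessSeq V (i : Fin (m + 1))) = 0 := by
      refine eq_zero_of_dvd_of_degree_lt (hu _ e1) ?_
      rw [Matrix.charpoly_degree_eq_dim, Fintype.card_fin]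
      refine lt_of_le_of_lt (degree_sum_le _ _) ?_
      rw [Finset.sup_lt_iff (by exact WithBot.bot_lt_coe _)]
      intro i _
      rw [← smul_eq_C_mul]
      refine lt_of_le_of_lt (degree_smul_le _ _) ?_
      rw [hessSeq_degree V hV]
      exact_mod_cast i.2
    have e3 := (Polynomial.Sequence.mk (hessSeq V) (hessSeq_degree V hV)).linearIndependent
    have e4 := e3.comp (fun i : Fin (m + 1) => (i : ℕ)) Fin.val_injective
    rw [Fintype.linearIndependent_iff] at e4
    refine e4 g ?_
    rw [← e2]
    refine Finset.sum_congr rfl fun i _ => ?_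
    rw [← smul_eq_C_mul]
    rfl
  let F : Matrix (Fin (m + 1)) (Fin (m + 1)) K := Matrix.of fun i j =>
    Fin.lastCases ((S⁻¹ * A * S) i (Fin.last m)) (fun j => Fin.cases 0 (fun i => U i j) i) j
  refine ⟨S, F, hS, ?_, ?_, ?_⟩
  · ext k j
    refine Fin.lastCases ?_ (fun j => ?_) j
    · have : (S * F) k (Fin.last m) = (S * (S⁻¹ * A * S)) k (Fin.last m) := by
        rw [Matrix.mul_apply, Matrix.mul_apply]
        refine Finset.sum_congr rfl fun i _ => ?_
        simp [F]
      rw [this, ← mul_assoc, ← mul_assoc, Matrix.mul_nonsing_inv _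
        ((Matrix.isUnit_iff_isUnit_det _).1 hS), one_mul]
    · have e1 : (A * S) k j.castSucc = (aeval A (X * hessSeq V j) *ᵥ u) k := by
        rw [map_mul, aeval_X, ← Matrix.mulVec_mulVec]
        rfl
      rw [e1, hessSeq_rel V hV, map_sum, Matrix.sum_mulVec, Finset.sum_apply, Matrix.mul_apply,
        Fin.sum_univ_succ]
      have e2 : ∑ i ∈ Finset.range ((j : ℕ) + 1),
          (aeval A (C (V i j) * hessSeq V (i + 1)) *ᵥ u) k =
          ∑ i ∈ Finset.range m, (aeval A (C (V i j) * hessSeq V (i + 1)) *ᵥ u) k := by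
        refine Finset.sum_subset (Finset.range_subset_range.2 j.2) fun i hi hi' => ?_
        have hi1 : i < m := Finset.mem_range.1 hi
        have hi2 : (j : ℕ) < i := by
          have := mt Finset.mem_range.2 hi'
          omega
        have : V i j = 0 := by
          simp only [V]
          rw [dif_pos ⟨hi1, j.2⟩]
          exact hU _ _ hi2
        simp [this]
      rw [e2, Finset.sum_range (fun i => (aeval A (C (V i j) * hessSeq V (i + 1)) *ᵥ u) k)]
      have e3 : F 0 j.castSucc = 0 := by simp [F]
      rw [e3, mul_zero, zero_add]
      refine Finset.sum_congr rfl fun i _ => ?_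
      have e4 : F i.succ j.castSucc = U i j := by simp [F]
      have e5 : V i j = U i j := by simp [V]
      rw [e4, e5, ← smul_eq_C_mul, map_smul, Matrix.smul_mulVec, mul_comm]
      rfl
  · intro i j; simp [F]
  · intro j; simp [F]

lemma det_hess {K : Type*} [Field K] {m : ℕ} (F : Matrix (Fin (m + 1)) (Fin (m + 1)) K)
    (U : Matrix (Fin m) (Fin m) K) (h1 : ∀ i j : Fin m, F i.succ j.castSucc = U i j)
    (h2 : ∀ j : Fin m, F 0 j.castSucc = 0) :
    F.det = (-1) ^ m * F 0 (Fin.last m) * U.det := by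
  rw [Matrix.det_succ_row_zero, Fin.sum_univ_castSucc]
  have : F.submatrix Fin.succ Fin.castSucc = U := by
    ext i j
    simp [h1]
  simp [h2, this]

lemma exists_corner {K : Type*} [Field K] {m : ℕ} (X : Matrix (Fin (m + 1)) (Fin (m + 1)) K)
    (hX : IsUnit X) :
    ∃ P Y : Matrix (Fin (m + 1)) (Fin (m + 1)) K, IsUnit P ∧ X * P = P * Y ∧ Y 0 0 ≠ 0 := by
  by_cases h0 : X 0 0 = 0
  · obtain ⟨j, hj⟩ : ∃ j, X 0 j ≠ 0 := by
      by_contra! h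
      exact ((Matrix.isUnit_iff_isUnit_det _).1 hX).ne_zero (Matrix.det_eq_zero_of_row_eq_zero 0 h)
    have hj0 : (0 : Fin (m + 1)) ≠ j := by rintro rfl; exact hj h0
    have e : Matrix.transvection j 0 (1 : K) * Matrix.transvection j 0 (-1 : K) = 1 := by
      rw [Matrix.transvection_mul_transvection_same _ _ hj0.symm]; simp
    refine ⟨Matrix.transvection j 0 1,
      Matrix.transvection j 0 (-1) * X * Matrix.transvection j 0 1, ?_, ?_, ?_⟩
    · exact IsUnit.of_mul_eq_one _ e
    · rw [← mul_assoc, ← mul_assoc, e, one_mul]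
    · rw [Matrix.mul_transvection_apply_same, Matrix.transvection_mul_apply_of_ne _ _ _ _ hj0,
        Matrix.transvection_mul_apply_of_ne _ _ _ _ hj0]
      simpa [h0] using hj
  · exact ⟨1, X, isUnit_one, by simp, h0⟩

/-- Every invertible matrix is similar to a product of a lower and an upper triangular matrix. -/
lemma exists_LU {K : Type*} [Field K] : ∀ {m : ℕ} (X : Matrix (Fin m) (Fin m) K), IsUnit X →
    ∃ P L U : Matrix (Fin m) (Fin m) K, IsUnit P ∧ X * P = P * (L * U) ∧
      (∀ i j, i < j → L i j = 0) ∧ (∀ i j, j < i → U i j = 0) ∧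
      (∀ i, L i i ≠ 0) ∧ (∀ i, U i i ≠ 0)
  | 0, X, _ => ⟨1, 1, 1, isUnit_one, Subsingleton.elim _ _, fun i => i.elim0, fun i => i.elim0,
      fun i => i.elim0, fun i => i.elim0⟩
  | m + 1, X, hX => by
    obtain ⟨P, Y, hP, hPY, hY⟩ := exists_corner X hX
    let Z : Matrix (Fin m) (Fin m) K := Matrix.of fun i j =>
      Y i.succ j.succ - Y i.succ 0 * (Y 0 0)⁻¹ * Y 0 j.succ
    let E : Matrix (Fin (m + 1)) (Fin (m + 1)) K := Matrix.of fun i j =>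
      Fin.cases (if j = 0 then 1 else 0)
        (fun i => Fin.cases (Y i.succ 0 * (Y 0 0)⁻¹) (fun j => if i = j then 1 else 0) j) i
    let W : Matrix (Fin (m + 1)) (Fin (m + 1)) K := Matrix.of fun i j =>
      Fin.cases (Y 0 j) (fun i => Fin.cases 0 (fun j => Z i j) j) i
    have hEW : Y = E * W := by
      ext i j
      rw [Matrix.mul_apply, Fin.sum_univ_succ]
      refine Fin.cases ?_ (fun i => ?_) i
      · simp [E, W]
      · refine Fin.cases ?_ (fun j => ?_) j
        · simp [E, W, hY]
        · simp [E, W, Z]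
    have hYu : Y.det ≠ 0 := by
      have := congrArg Matrix.det hPY
      rw [Matrix.det_mul, Matrix.det_mul] at this
      have hp := ((Matrix.isUnit_iff_isUnit_det _).1 hP).ne_zero
      have hx := ((Matrix.isUnit_iff_isUnit_det _).1 hX).ne_zero
      intro h
      rw [h, mul_zero] at this
      exact mul_ne_zero hx hp this
    have hZ : IsUnit Z := by
      rw [Matrix.isUnit_iff_isUnit_det, isUnit_iff_ne_zero]
      intro h
      apply hYu
      have hW : W.det = Y 0 0 * Z.det := by
        rw [Matrix.det_succ_column_zero, Fin.sum_univ_succ]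
        have : W.submatrix Fin.succ Fin.succ = Z := by
          ext i j
          simp [W]
        have w0 : W 0 0 = Y 0 0 := by simp [W]
        have w1 : ∀ i : Fin m, W i.succ 0 = 0 := by intro i; simp [W]
        simp [this, w0, w1]
      rw [hEW, Matrix.det_mul, hW, h, mul_zero, mul_zero]
    obtain ⟨Q, L, U, hQ, hQLU, hL, hU, hL', hU'⟩ := exists_LU Z hZ
    let Q1 : Matrix (Fin (m + 1)) (Fin (m + 1)) K := Matrix.of fun i j =>
      Fin.cases (if j = 0 then 1 else 0)
        (fun i => Fin.cases 0 (fun j => Q i j) j) i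
    have hQ1 : IsUnit Q1 := by
      rw [Matrix.isUnit_iff_isUnit_det] at hQ ⊢
      rw [Matrix.det_succ_row_zero, Fin.sum_univ_succ]
      have : Q1.submatrix Fin.succ Fin.succ = Q := by
        ext i j
        simp [Q1]
      have w0 : Q1 0 0 = 1 := by simp [Q1]
      have w1 : ∀ i : Fin m, Q1 0 i.succ = 0 := by intro i; simp [Q1]
      simpa [this, w0, w1] using hQ
    have hQd := (Matrix.isUnit_iff_isUnit_det _).1 hQ
    let L1 : Matrix (Fin (m + 1)) (Fin (m + 1)) K := Matrix.of fun i j =>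
      Fin.cases (if j = 0 then 1 else 0)
        (fun i => Fin.cases ((Q⁻¹ *ᵥ fun k => Y k.succ 0 * (Y 0 0)⁻¹) i) (fun j => L i j) j) i
    let U1 : Matrix (Fin (m + 1)) (Fin (m + 1)) K := Matrix.of fun i j =>
      Fin.cases (Fin.cases (Y 0 0) (fun j => ((fun k => Y 0 k.succ) ᵥ* Q) j) j)
        (fun i => Fin.cases 0 (fun j => U i j) j) i
    have hc : ∀ i : Fin m, ∑ k, Q i k * (Q⁻¹ *ᵥ fun k => Y k.succ 0 * (Y 0 0)⁻¹) k
        = Y i.succ 0 * (Y 0 0)⁻¹ := by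
      intro i
      change (Q *ᵥ (Q⁻¹ *ᵥ fun k => Y k.succ 0 * (Y 0 0)⁻¹)) i = _
      rw [Matrix.mulVec_mulVec, Matrix.mul_nonsing_inv _ hQd, Matrix.one_mulVec]
    have hq : ∀ i j : Fin m, ∑ k, (∑ l, Q i l * L l k) * U k j = ∑ k, Z i k * Q k j := by
      intro i j
      have := congrFun (congrFun hQLU i) j
      rw [← mul_assoc, Matrix.mul_apply, Matrix.mul_apply] at this
      simpa only [Matrix.mul_apply] using this.symm
    have h2 : Y * Q1 = Q1 * (L1 * U1) := by
      rw [← mul_assoc]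
      have a00 : (Q1 * L1) 0 0 = 1 := by
        rw [Matrix.mul_apply, Fin.sum_univ_succ]; simp [Q1, L1]
      have a01 : ∀ j : Fin m, (Q1 * L1) 0 j.succ = 0 := by
        intro j; rw [Matrix.mul_apply, Fin.sum_univ_succ]; simp [Q1, L1]
      have a10 : ∀ i : Fin m, (Q1 * L1) i.succ 0 = Y i.succ 0 * (Y 0 0)⁻¹ := by
        intro i; rw [Matrix.mul_apply, Fin.sum_univ_succ, ← hc i]; simp [Q1, L1]
      have a11 : ∀ i j : Fin m, (Q1 * L1) i.succ j.succ = ∑ l, Q i l * L l j := by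
        intro i j; rw [Matrix.mul_apply, Fin.sum_univ_succ]; simp [Q1, L1]
      ext i j
      rw [Matrix.mul_apply, Matrix.mul_apply, Fin.sum_univ_succ, Fin.sum_univ_succ]
      refine Fin.cases ?_ (fun i => ?_) i
      · simp only [a00, a01]
        refine Fin.cases ?_ (fun j => ?_) j
        · simp [Q1, U1]
        · simp [Q1, U1, Matrix.vecMul, dotProduct]
      · simp only [a10, a11]
        refine Fin.cases ?_ (fun j => ?_) j
        · simp [Q1, U1, hY]
        · simp only [Q1, U1, Matrix.of_apply, Fin.cases_zero, Fin.cases_succ, hq]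
          simp [Matrix.vecMul, dotProduct, Z, sub_mul, Finset.mul_sum, mul_assoc]
    refine ⟨P * Q1, L1, U1, hP.mul hQ1, ?_, ?_, ?_, ?_, ?_⟩
    · rw [← mul_assoc, hPY, mul_assoc, h2, mul_assoc]
    · intro i j hij
      refine Fin.cases (fun hij => ?_) (fun i => ?_) i hij
      · simp [L1, hij.ne']
      · refine Fin.cases (fun hij => ?_) (fun j hij => ?_) j
        · simp at hij
        · simpa [L1] using hL _ _ (by simpa using hij)
    · intro i j hij
      refine Fin.cases (fun hij => ?_) (fun i => ?_) i hij
      · simp at hij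
      · refine Fin.cases (fun hij => ?_) (fun j hij => ?_) j
        · simp [U1]
        · simpa [U1] using hU _ _ (by simpa using hij)
    · intro i
      refine Fin.cases ?_ (fun i => ?_) i
      · simp [L1]
      · simpa [L1] using hL' i
    · intro i
      refine Fin.cases ?_ (fun i => ?_) i
      · simpa [U1] using hY
      · have hi := hU' i
        simpa [U1] using hi


/-- The main step: `A` and `B` have similar copies with product block triangular. -/
lemma exists_prod {K : Type*} [Field K] {m : ℕ}
    (A B : Matrix (Fin (m + 1)) (Fin (m + 1)) K) (hA : IsCyclicMat A) (hB : IsCyclicMat B)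
    (X : Matrix (Fin m) (Fin m) K) (hX : IsUnit X) (δ : K)
    (hdet : X.det * δ = A.det * B.det) :
    ∃ (S T G F : Matrix (Fin (m + 1)) (Fin (m + 1)) K) (P Y : Matrix (Fin m) (Fin m) K),
      IsUnit S ∧ IsUnit T ∧ IsUnit P ∧
      A * S = S * G ∧ B * T = T * F ∧ X * P = P * Y ∧
      (∀ i j : Fin m, (G * F) i.castSucc j.castSucc = Y i j) ∧
      (∀ j : Fin m, (G * F) (Fin.last m) j.castSucc = 0) ∧
      (G * F) (Fin.last m) (Fin.last m) = δ := by
  obtain ⟨P, L, U, hP, hPY, hL, hU, hL', hU'⟩ := exists_LU X hX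
  obtain ⟨T, F, hT, hBT, hF, hF0⟩ := exists_hess B hB U hU hU'
  obtain ⟨S, G, hS, hAS, hG, hG0⟩ := exists_hess A hA (L.submatrix Fin.rev Fin.rev)
    (fun i j hij => hL _ _ (by simpa using hij)) (fun i => hL' _)
  have dF := det_hess F U hF hF0
  have dG := det_hess G _ hG hG0
  have sim : ∀ {k : ℕ} (A S G : Matrix (Fin k) (Fin k) K), IsUnit S → A * S = S * G →
      A.det = G.det := by
    intro k A S G hS h
    have h' := congrArg Matrix.det h
    rw [Matrix.det_mul, Matrix.det_mul, mul_comm] at h'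
    exact mul_left_cancel₀ ((Matrix.isUnit_iff_isUnit_det _).1 hS).ne_zero h'
  have dA := sim _ _ _ hS hAS
  have dB := sim _ _ _ hT hBT
  have dX := sim _ _ _ hP hPY
  have dL : (L.submatrix Fin.rev Fin.rev).det = L.det :=
    Matrix.det_submatrix_equiv_self Fin.revPerm L
  have hγ : G 0 (Fin.last m) * F 0 (Fin.last m) = δ := by
    rw [dA, dB, dF, dG, dL, dX, Matrix.det_mul] at hdet
    have hd : L.det * U.det ≠ 0 := by
      rw [← Matrix.det_mul, ← dX]
      exact ((Matrix.isUnit_iff_isUnit_det _).1 hX).ne_zero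
    apply mul_left_cancel₀ hd
    rw [hdet]
    have : ((-1 : K) ^ m) * (-1) ^ m = 1 := by rw [← mul_pow]; simp
    linear_combination (-(L.det * U.det * G 0 (Fin.last m) * F 0 (Fin.last m))) * this
  -- the reversal of `G`
  let J : Matrix (Fin (m + 1)) (Fin (m + 1)) K := (1 : Matrix _ _ K).submatrix Fin.rev id
  have hl : ∀ (N : Matrix (Fin (m + 1)) (Fin (m + 1)) K) i j, (J * N) i j = N i.rev j := by
    intro N i j
    simp [J, Matrix.mul_apply, Matrix.one_apply]
  have hr : ∀ (N : Matrix (Fin (m + 1)) (Fin (m + 1)) K) i j, (N * J) i j = N i j.rev := by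
    intro N i j
    simp [J, Matrix.mul_apply, Matrix.one_apply, Fin.rev_eq_iff]
  have hJJ : J * J = 1 := by
    ext i j
    rw [hl]
    simp [J, Matrix.one_apply]
  have hJ : ∀ i j, (J * G * J) i j = G i.rev j.rev := by
    intro i j
    rw [hr, hl]
  refine ⟨S * J, T, J * G * J, F, P, L * U, hS.mul (IsUnit.of_mul_eq_one _ hJJ), hT, hP, ?_, hBT,
    hPY, ?_, ?_, ?_⟩
  · rw [← mul_assoc, hAS]
    calc S * G * J = S * 1 * G * J := by rw [mul_one]
      _ = _ := by rw [← hJJ]; simp only [mul_assoc]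
  · intro i j
    rw [Matrix.mul_apply, Fin.sum_univ_succ, hF0, mul_zero, zero_add, Matrix.mul_apply]
    refine Finset.sum_congr rfl fun k _ => ?_
    rw [hJ, Fin.rev_castSucc, Fin.rev_succ, hG, hF]
    simp
  · intro j
    rw [Matrix.mul_apply, Fin.sum_univ_succ, hF0, mul_zero, zero_add]
    refine Finset.sum_eq_zero fun k _ => ?_
    rw [hJ, Fin.rev_last, Fin.rev_succ, hG0, zero_mul]
  · rw [Matrix.mul_apply, Fin.sum_univ_succ, hJ, Fin.rev_last, Fin.rev_zero, hγ]
    rw [Finset.sum_eq_zero, add_zero]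
    intro k _
    rw [hJ, Fin.rev_last, Fin.rev_succ, hG0, zero_mul]

lemma IsCyclicMat.reindex {ι κ : Type*} [Fintype ι] [DecidableEq ι] [Fintype κ] [DecidableEq κ]
    {K : Type*} [Field K] {A : Matrix ι ι K} (hA : IsCyclicMat A) (e : ι ≃ κ) :
    IsCyclicMat (Matrix.reindex e e A) := by
  unfold IsCyclicMat at *
  rw [Matrix.charpoly_reindex, hA]
  exact (minpoly.algEquiv_eq (Matrix.reindexAlgEquiv K K e) A).symm

theorem product_of_cyclic_classes_contains_block_diag_dilation {K : Type*} [Field K]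
    {n : ℕ} (hn : 2 ≤ n) (hK : Nat.card K = 2 → 3 ≤ n)
    (A B : Matrix (Fin (n - 1) ⊕ Fin 1) (Fin (n - 1) ⊕ Fin 1) K)
    (hA : IsUnit A.det) (hB : IsUnit B.det)
    (hcA : IsCyclicMat A) (hcB : IsCyclicMat B)
    (X : Matrix (Fin (n - 1)) (Fin (n - 1)) K) (hX : IsUnit X.det)
    (δ : K) (hδ : δ ≠ 0)
    (heig : IsUnit (X - δ • (1 : Matrix (Fin (n - 1)) (Fin (n - 1)) K)).det)
    (hdet : X.det * δ = A.det * B.det) :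
    ∃ S T : Matrix (Fin (n - 1) ⊕ Fin 1) (Fin (n - 1) ⊕ Fin 1) K,
      IsUnit S.det ∧ IsUnit T.det ∧
      Matrix.fromBlocks X 0 0 (δ • (1 : Matrix (Fin 1) (Fin 1) K))
        = (S * A * S⁻¹) * (T * B * T⁻¹) := by
  clear hn hK
  generalize n - 1 = m at *
  let e : Fin m ⊕ Fin 1 ≃ Fin (m + 1) := finSumFinEquiv
  have hXu : IsUnit X := (Matrix.isUnit_iff_isUnit_det _).2 hX
  obtain ⟨S, T, G, F, P, Y, hS, hT, hP, hAS, hBT, hXP, h1, h2, h3⟩ :=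
    exists_prod (Matrix.reindex e e A) (Matrix.reindex e e B) (hcA.reindex e) (hcB.reindex e) X hXu δ
      (by rw [Matrix.det_reindex_self, Matrix.det_reindex_self, hdet])
  -- transport everything to the sum type
  let r := Matrix.reindexAlgEquiv K K e.symm
  have hrA : r (Matrix.reindex e e A) = A := by
    ext i j; simp [r]
  have hrB : r (Matrix.reindex e e B) = B := by
    ext i j; simp [r]
  have hAS' : A * r S = r S * r G := by
    rw [← map_mul, ← hAS, map_mul, hrA]
  have hBT' : B * r T = r T * r F := by
    rw [← map_mul, ← hBT, map_mul, hrB]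
  have hS' : IsUnit (r S) := hS.map r
  have hT' : IsUnit (r T) := hT.map r
  let v : Matrix (Fin m) (Fin 1) K := Matrix.of fun i _ => (G * F) i.castSucc (Fin.last m)
  have hGF : r G * r F = Matrix.fromBlocks Y v 0 (δ • (1 : Matrix (Fin 1) (Fin 1) K)) := by
    rw [← map_mul]
    have el : ∀ i : Fin m, e (Sum.inl i) = i.castSucc := fun i => rfl
    have er : ∀ i : Fin 1, e (Sum.inr i) = Fin.last m := by
      intro i
      rw [Subsingleton.elim i 0]
      rfl
    ext (i | i) (j | j)
    · simp [r, el, h1]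
    · simp [r, el, er, v]
    · simp [r, el, er, h2]
    · simp [r, er, h3, Subsingleton.elim i j]
  -- remove the off-diagonal block
  have hPd := (Matrix.isUnit_iff_isUnit_det _).1 hP
  let z : Matrix (Fin m) (Fin 1) K :=
    (X - δ • (1 : Matrix (Fin m) (Fin m) K))⁻¹ * (P * v)
  have hz : X * z - δ • z = P * v := by
    have : (X - δ • (1 : Matrix (Fin m) (Fin m) K)) * z = P * v := by
      simp only [z]
      rw [← Matrix.mul_assoc, Matrix.mul_nonsing_inv _ heig, Matrix.one_mul]
    rw [← this, Matrix.sub_mul, Matrix.smul_mul, Matrix.one_mul]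
  let W : Matrix (Fin m ⊕ Fin 1) (Fin m ⊕ Fin 1) K := Matrix.fromBlocks P z 0 1
  have hW : IsUnit W := by
    rw [Matrix.isUnit_iff_isUnit_det]
    simp only [W]
    rw [Matrix.det_fromBlocks_zero₂₁, Matrix.det_one, mul_one]
    exact hPd
  have hMW : Matrix.fromBlocks X 0 0 (δ • (1 : Matrix (Fin 1) (Fin 1) K)) * W
      = W * (r G * r F) := by
    rw [hGF]
    simp only [W]
    rw [Matrix.fromBlocks_multiply, Matrix.fromBlocks_multiply]
    simp [hXP, ← hz]
  have hWd := (Matrix.isUnit_iff_isUnit_det _).1 hW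
  have hSd := (Matrix.isUnit_iff_isUnit_det _).1 hS'
  have hTd := (Matrix.isUnit_iff_isUnit_det _).1 hT'
  refine ⟨W * (r S)⁻¹, W * (r T)⁻¹, ?_, ?_, ?_⟩
  · rw [Matrix.det_mul]
    exact hWd.mul (Matrix.isUnit_nonsing_inv_det _ hSd)
  · rw [Matrix.det_mul]
    exact hWd.mul (Matrix.isUnit_nonsing_inv_det _ hTd)
  · have gA : (r S)⁻¹ * A * r S = r G := by
      rw [mul_assoc, hAS', ← mul_assoc, Matrix.nonsing_inv_mul _ hSd, one_mul]
    have gB : (r T)⁻¹ * B * r T = r F := by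
      rw [mul_assoc, hBT', ← mul_assoc, Matrix.nonsing_inv_mul _ hTd, one_mul]
    have gM : Matrix.fromBlocks X 0 0 (δ • (1 : Matrix (Fin 1) (Fin 1) K))
        = W * (r G * r F) * W⁻¹ := by
      rw [← hMW, mul_assoc, Matrix.mul_nonsing_inv _ hWd, mul_one]
    rw [gM, ← gA, ← gB, Matrix.mul_inv_rev, Matrix.mul_inv_rev,
      Matrix.nonsing_inv_nonsing_inv _ hSd, Matrix.nonsing_inv_nonsing_inv _ hTd]
    have hWW := Matrix.nonsing_inv_mul _ hWd
    calc _ = W * (r S)⁻¹ * A * r S * 1 * (r T)⁻¹ * B * r T * W⁻¹ := by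
          simp only [mul_assoc, one_mul]
      _ = _ := by rw [← hWW]; simp only [mul_assoc]
end
end

section
/- Let K be a field and n ≥ 2, where additionally n ≥ 3 if K has exactly two elements. Let A ∈ GL(n, K) be a cyclic matrix whose characteristic polynomial is reducible, i.e., it factors as a product of two nonconstant monic polynomials in K[x]. Then there exist X, Y ∈ GL(n, K) such that (X A X⁻¹) · (Y A⁻¹ Y⁻¹) is a transvection. -/
open Matrix Polynomial

noncomputable section

theorem cyc_transvection_of_comm {K : Type*} [Field K] {n : ℕ}
    (A M : Matrix (Fin n) (Fin n) K) (hA : IsUnit A.det) (hM : IsUnit M.det)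
    (u z : Fin n → K) (h : M * A - A * M = vecMulVec u z) (h0 : M * A - A * M ≠ 0) :
    IsTransvection ((M * A * M⁻¹) * (1 * A⁻¹ * 1⁻¹)) := by
  have e : (M * A * M⁻¹) * (1 * A⁻¹ * 1⁻¹) - 1 = vecMulVec u (z ᵥ* (M⁻¹ * A⁻¹)) := by
    rw [← vecMulVec_mul, ← h, sub_mul]
    have : A * M * (M⁻¹ * A⁻¹) = 1 := by
      rw [mul_assoc, ← mul_assoc M, mul_nonsing_inv _ hM, one_mul, mul_nonsing_inv _ hA]
    rw [this]
    simp [mul_assoc]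
  set w := z ᵥ* (M⁻¹ * A⁻¹) with hw
  set T := (M * A * M⁻¹) * (1 * A⁻¹ * 1⁻¹) with hT
  have hne : T - 1 ≠ 0 := by
    intro h1
    apply h0
    have h2 : (M * A - A * M) * (M⁻¹ * A⁻¹) = 0 := by
      rw [h, vecMulVec_mul, ← hw, ← e, h1]
    have h3 : (M * A - A * M) * (M⁻¹ * A⁻¹) * (A * M) = 0 := by rw [h2, zero_mul]
    rwa [mul_assoc, mul_assoc M⁻¹, ← mul_assoc A⁻¹, nonsing_inv_mul _ hA, one_mul,
      nonsing_inv_mul _ hM, mul_one] at h3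
  have hdet : T.det = 1 := by
    have a1 : A.det * (A⁻¹).det = 1 := by rw [← det_mul, mul_nonsing_inv _ hA, det_one]
    have a2 : M.det * (M⁻¹).det = 1 := by rw [← det_mul, mul_nonsing_inv _ hM, det_one]
    simp only [hT, det_mul, inv_one, det_one, one_mul, mul_one]
    calc _ = (A.det * (A⁻¹).det) * (M.det * (M⁻¹).det) := by ring
      _ = 1 := by rw [a1, a2, one_mul]
  have hwu : w ⬝ᵥ u = 0 := by
    have e2 : T = 1 + vecMulVec u w := by rw [← e]; abel
    rw [e2, vecMulVec_eq Unit, det_one_add_replicateCol_mul_replicateRow] at hdet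
    simpa using hdet
  refine ⟨fun h1 => hne (by rw [h1, sub_self]), ?_, ?_⟩
  · rw [e, vecMulVec_mul_vecMulVec, hwu]
    simp
  · apply le_antisymm
    · rw [e]; exact rank_vecMulVec_le _ _
    · rw [Nat.one_le_iff_ne_zero]
      intro h1
      rw [Matrix.rank, Submodule.finrank_eq_zero, LinearMap.range_eq_bot] at h1
      apply hne
      apply (toLin' (R := K)).injective
      rw [map_zero]
      exact h1

theorem cyc_X_mul_mod {K : Type*} [Field K] (f h : K[X]) (hf : f.Monic) (hd : 0 < f.natDegree) :
    (X * h) %ₘ f = X * (h %ₘ f) - C ((h %ₘ f).coeff (f.natDegree - 1)) * f := by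
  set r := h %ₘ f with hr
  set c := r.coeff (f.natDegree - 1) with hc
  have hrd : r.degree < f.degree := degree_modByMonic_lt h hf
  refine (div_modByMonic_unique (f := X * h) (X * (h /ₘ f) + C c) (X * r - C c * f) hf ⟨?_, ?_⟩).2
  · have := modByMonic_add_div h f
    rw [← hr] at this
    calc _ = X * (r + f * (h /ₘ f)) := by ring
      _ = _ := by rw [this]
  · rw [degree_eq_natDegree hf.ne_zero, degree_lt_iff_coeff_zero]
    intro m hm
    obtain ⟨k, rfl⟩ : ∃ k, m = k + 1 := ⟨m - 1, by omega⟩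
    rw [coeff_sub, coeff_X_mul, coeff_C_mul]
    rcases hm.eq_or_lt with h1 | h1
    · have : k = f.natDegree - 1 := by omega
      rw [← h1, hf.coeff_natDegree, this, hc]; ring
    · rw [coeff_eq_zero_of_natDegree_lt h1, coeff_eq_zero_of_degree_lt, mul_zero, sub_zero]
      apply hrd.trans_le
      rw [degree_eq_natDegree hf.ne_zero]
      exact_mod_cast (by omega : f.natDegree ≤ k)

theorem cyc_main {K : Type*} [Field K] {n : ℕ}
    (A : Matrix (Fin n) (Fin n) K) (hA : IsUnit A.det) (hcA : IsCyclicMat A)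
    (f g b : K[X]) (hf : f.Monic) (hfd : 0 < f.natDegree)
    (hp : A.charpoly = f * g) (hb : IsCoprime b (f * g)) (hgb : ¬ g ∣ 1 - b) :
    ∃ X Y : Matrix (Fin n) (Fin n) K, IsUnit X.det ∧ IsUnit Y.det ∧
      IsTransvection ((X * A * X⁻¹) * (Y * A⁻¹ * Y⁻¹)) := by
  set φ : Module.End K (Fin n → K) := toLin' A with hφ
  have hmin : minpoly K φ = f * g := by
    rw [hφ, minpoly_toLin', ← hp]; exact hcA.symm
  obtain ⟨v, hv⟩ := Module.exists_ker_toSpanSingleton_eq_annihilator K[X] (Module.AEval' φ)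
  obtain ⟨v, rfl⟩ := (Module.AEval'.of _).surjective v
  rw [← span_minpoly_eq_annihilator, hmin] at hv
  let E : K[X] →ₗ[K] (Fin n → K) := (LinearMap.applyₗ v).comp (aeval φ).toLinearMap
  have hE : ∀ h, E h = aeval φ h v := fun h => rfl
  have hE0 : ∀ h, E h = 0 ↔ f * g ∣ h := by
    intro h
    rw [← Ideal.mem_span_singleton, ← hv]
    rw [LinearMap.mem_ker, LinearMap.toSpanSingleton_apply]
    rfl
  have hEX : ∀ h, E (X * h) = φ (E h) := by
    intro h; simp [hE]
  have hEs : Function.Surjective E := by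
    let L : (Fin n → K) →ₗ[K] (Fin n → K) :=
      (E.comp (degreeLT K n).subtype).comp (degreeLTEquiv K n).symm.toLinearMap
    have hL : Function.Injective L := by
      rw [← LinearMap.ker_eq_bot, LinearMap.ker_eq_bot']
      intro x hx
      have h1 : f * g ∣ ((degreeLTEquiv K n).symm x : K[X]) := (hE0 _).1 hx
      have h2 := ((degreeLTEquiv K n).symm x).2
      rw [mem_degreeLT] at h2
      have h3 : (f * g).degree = n := by
        rw [← hp, charpoly_degree_eq_dim, Fintype.card_fin]
      have h4 := eq_zero_of_dvd_of_degree_lt h1 (h3 ▸ h2)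
      have h5 : (degreeLTEquiv K n).symm x = 0 := Subtype.ext h4
      simpa using h5
    intro y
    obtain ⟨x, hx⟩ := LinearMap.injective_iff_surjective.1 hL y
    exact ⟨_, hx⟩
  obtain ⟨s, hs⟩ := E.exists_rightInverse_of_surjective (LinearMap.range_eq_top.2 hEs)
  have hs' : ∀ y, E (s y) = y := fun y => LinearMap.congr_fun hs y
  have hsE : ∀ h, f * g ∣ s (E h) - h := by
    intro h
    rw [← hE0, map_sub, hs', sub_self]
  have hsm : ∀ h, s (E h) %ₘ f = h %ₘ f := by
    intro h
    have := (modByMonic_eq_zero_iff_dvd hf).2 ((dvd_mul_right f g).trans (hsE h))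
    rwa [sub_modByMonic, sub_eq_zero] at this
  let Q : K[X] →ₗ[K] K[X] :=
    LinearMap.mulLeft K b + (LinearMap.mulLeft K (1 - b)).comp (modByMonicHom f)
  have hQ : ∀ h, Q h = b * h + (1 - b) * (h %ₘ f) := fun h => rfl
  let F : Module.End K (Fin n → K) := E.comp (Q.comp s)
  have hF : ∀ h, F (E h) = E (Q h) := by
    intro h
    change E (Q (s (E h))) = _
    rw [← sub_eq_zero, ← map_sub, hE0, hQ, hQ, hsm]
    have : b * s (E h) + (1 - b) * (h %ₘ f) - (b * h + (1 - b) * (h %ₘ f))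
      = b * (s (E h) - h) := by ring
    rw [this]
    exact (hsE h).mul_left b
  have hFinj : Function.Injective F := by
    rw [← LinearMap.ker_eq_bot, LinearMap.ker_eq_bot']
    intro y hy
    obtain ⟨h, rfl⟩ := hEs y
    rw [hF, hE0, hQ] at hy
    have h1 : f ∣ h := by
      have h2 : f ∣ b * h + (1 - b) * (h %ₘ f) := (dvd_mul_right f g).trans hy
      have h3 : b * h + (1 - b) * (h %ₘ f) = h - (1 - b) * (f * (h /ₘ f)) := by
        linear_combination (1 - b) * modByMonic_add_div h f
      rw [h3] at h2
      have := dvd_add h2 ((dvd_mul_right f (h /ₘ f)).mul_left (1 - b))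
      simpa using this
    rw [(modByMonic_eq_zero_iff_dvd hf).2 h1, mul_zero, add_zero] at hy
    exact (hE0 _).2 (hb.symm.dvd_of_dvd_mul_left hy)
  let z : (Fin n → K) →ₗ[K] K :=
    (lcoeff K (f.natDegree - 1)).comp ((modByMonicHom f).comp s)
  have hz : ∀ h, z (E h) = (h %ₘ f).coeff (f.natDegree - 1) := by
    intro h
    change (s (E h) %ₘ f).coeff _ = _
    rw [hsm]
  let u := - E ((1 - b) * f)
  have hcomm : ∀ y, F (φ y) - φ (F y) = z y • u := by
    intro y
    obtain ⟨h, rfl⟩ := hEs y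
    rw [← hEX, hF, hF, ← hEX, hz, ← map_sub, hQ, hQ, cyc_X_mul_mod f h hf hfd]
    change _ = _ • - E _
    rw [← map_neg, ← map_smul, smul_eq_C_mul]
    congr 1
    ring
  have hu : u ≠ 0 := by
    intro h
    have h1 : f * g ∣ (1 - b) * f := (hE0 _).1 (neg_eq_zero.1 h)
    rw [mul_comm (1 - b)] at h1
    exact hgb ((mul_dvd_mul_iff_left hf.ne_zero).1 h1)
  have hMF : toLin' (LinearMap.toMatrix' F) = F := toLin'_toMatrix' F
  refine ⟨LinearMap.toMatrix' F, 1, ?_, by simp, ?_⟩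
  · rw [← Matrix.isUnit_iff_isUnit_det, ← Matrix.mulVec_injective_iff_isUnit]
    intro x y hxy
    apply hFinj
    rw [← hMF]
    simpa only [toLin'_apply] using hxy
  · have hkey : LinearMap.toMatrix' F * A - A * LinearMap.toMatrix' F
        = vecMulVec u (fun i => z (Pi.single i 1)) := by
      apply (toLin' (R := K)).injective
      apply LinearMap.ext
      intro y
      rw [map_sub, toLin'_mul, toLin'_mul, hMF]
      change F (φ y) - φ (F y) = _
      rw [hcomm, toLin'_apply, vecMulVec_mulVec]
      have : z y = (fun i => z (Pi.single i 1)) ⬝ᵥ y := by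
        conv_lhs => rw [pi_eq_sum_univ' y]
        simp [dotProduct, mul_comm, map_sum]
      rw [this]
      ext i
      simp [mul_comm]
    refine cyc_transvection_of_comm A _ hA ?_ u _ hkey ?_
    · rw [← Matrix.isUnit_iff_isUnit_det, ← Matrix.mulVec_injective_iff_isUnit]
      intro x y hxy
      apply hFinj
      rw [← hMF]
      simpa only [toLin'_apply] using hxy
    · intro h0
      have h1 : ∀ y, z y • u = 0 := by
        intro y
        rw [← hcomm]
        have := LinearMap.congr_fun (congrArg toLin' h0) y
        rw [map_sub, toLin'_mul, toLin'_mul, hMF] at this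
        simpa [hφ] using this
      have h2 := h1 (E (X ^ (f.natDegree - 1)))
      rw [hz, (modByMonic_eq_self_iff hf).2, coeff_X_pow_self, one_smul] at h2
      · exact hu h2
      · rw [degree_X_pow, degree_eq_natDegree hf.ne_zero]
        exact_mod_cast (by omega : f.natDegree - 1 < f.natDegree)

theorem class_times_inverse_class_contains_transvection {K : Type*} [Field K] {n : ℕ}
    (hn : 2 ≤ n) (hK : Nat.card K = 2 → 3 ≤ n)
    (A : Matrix (Fin n) (Fin n) K) (hA : IsUnit A.det) (hcA : IsCyclicMat A)
    (hred : ∃ f g : Polynomial K, f.Monic ∧ g.Monic ∧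
      0 < f.natDegree ∧ 0 < g.natDegree ∧ A.charpoly = f * g) :
    ∃ X Y : Matrix (Fin n) (Fin n) K, IsUnit X.det ∧ IsUnit Y.det ∧
      IsTransvection ((X * A * X⁻¹) * (Y * A⁻¹ * Y⁻¹)) := by
  obtain ⟨f, g, hf, hg, hfd, hgd, hp⟩ := hred
  by_cases hβ : ∃ β : K, β ≠ 0 ∧ β ≠ 1
  · obtain ⟨β, h0, h1⟩ := hβ
    refine cyc_main A hA hcA f g (C β) hf hfd hp ?_ ?_
    · exact (isCoprime_one_left (x := f * g)).of_isCoprime_of_dvd_left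
        (isUnit_C.2 (isUnit_iff_ne_zero.2 h0)).dvd
    · intro h
      have h2 : IsUnit (1 - C β) := by
        rw [← C_1, ← C_sub]
        exact isUnit_C.2 (isUnit_iff_ne_zero.2 (sub_ne_zero.2 (Ne.symm h1)))
      have := natDegree_eq_zero_of_isUnit (isUnit_of_dvd_unit h h2)
      omega
  · push Not at hβ
    have hcard : Nat.card K = 2 := by
      have : (Set.univ : Set K) = {0, 1} := by
        ext x
        by_cases hx : x = 0
        · simp [hx]
        · simp [hβ x hx]
      rw [← Set.ncard_univ, this, Set.ncard_pair zero_ne_one]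
    have hn3 := hK hcard
    have hcop : IsCoprime X (f * g) := by
      rw [← hp, Polynomial.irreducible_X.coprime_iff_not_dvd, X_dvd_iff]
      intro h
      have := Matrix.det_eq_sign_charpoly_coeff A
      rw [h, mul_zero] at this
      exact hA.ne_zero this
    have hdeg : f.natDegree + g.natDegree = n := by
      rw [← hf.natDegree_mul hg, ← hp, charpoly_natDegree_eq_dim, Fintype.card_fin]
    have key : ∀ q : K[X], 2 ≤ q.natDegree → ¬ q ∣ 1 - X := by
      intro q hq h
      have h1 : (1 - X : K[X]).natDegree = 1 := by
        rw [← neg_sub, natDegree_neg, ← C_1, natDegree_X_sub_C]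
      have h2 : (1 - X : K[X]) ≠ 0 := by
        intro h; rw [h] at h1; simp at h1
      have := natDegree_le_of_dvd h h2
      omega
    by_cases hg2 : 2 ≤ g.natDegree
    · exact cyc_main A hA hcA f g X hf hfd hp hcop (key g hg2)
    · exact cyc_main A hA hcA g f X hg hgd (by rw [hp, mul_comm]) (by rwa [mul_comm])
        (key f (by omega))
end
end

section
/- Let K be a field and V a 2n-dimensional K-vector space equipped with a nondegenerate alternating bilinear form f. Let φ be a symplectic transformation of (V, f) (an invertible linear map with f(φx, φy) = f(x, y) for all x, y). If dim ker(φ − id) = n, then there exists an n-dimensional subspace T of V that is totally degenerate (f(x, y) = 0 for all x, y ∈ T) and anti-invariant for φ, i.e., T ∩ φ(T) = 0 (so V = T ⊕ φ(T)). -/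
open Module

noncomputable section

theorem aux_step {K V : Type*} [Field K]
    [AddCommGroup V] [Module K V] [FiniteDimensional K V] {n : ℕ}
    (f : LinearMap.BilinForm K V) (hnd : f.Nondegenerate)
    (halt : ∀ v : V, f v v = 0) (hrefl : f.IsRefl)
    (hdim : Module.finrank K V = 2 * n)
    (F G T : Submodule K V) (hG : finrank K G = n) (hFG : f.orthogonal F = G)
    (hTG : Disjoint T G) (hT : finrank K T < n) :
    ∃ v ∈ f.orthogonal T, v ∉ T ⊔ F := by
  by_contra! h
  have hle : f.orthogonal T ≤ T ⊔ F := h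
  have h1 := LinearMap.BilinForm.finrank_orthogonal hnd T
  have h2 := Submodule.finrank_sup_add_finrank_inf_eq (f.orthogonal T) G
  have h3 := Submodule.finrank_le (f.orthogonal T ⊔ G)
  have h4 : f.orthogonal T ⊓ G ≤ T ⊓ G := by
    refine le_inf ?_ inf_le_right
    conv_rhs => rw [← LinearMap.BilinForm.orthogonal_orthogonal hnd hrefl T]
    intro x hx
    rw [LinearMap.BilinForm.mem_orthogonal_iff]
    intro y hy
    obtain ⟨t, ht, u, hu, rfl⟩ := Submodule.mem_sup.1 (hle hy)
    have hx2 := hx.2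
    rw [← hFG] at hx2
    have e1 : f t x = 0 := (LinearMap.BilinForm.mem_orthogonal_iff.1 hx.1) t ht
    have e2 : f u x = 0 := (LinearMap.BilinForm.mem_orthogonal_iff.1 hx2) u hu
    change f (t + u) x = 0
    simp [e1, e2]
  rw [hTG.eq_bot, le_bot_iff] at h4
  rw [h4, finrank_bot] at h2
  omega

theorem aux_disj {K V : Type*} [Field K] [AddCommGroup V] [Module K V]
    (T F : Submodule K V) (v : V) (h : Disjoint T F) (hv : v ∉ T ⊔ F) :
    Disjoint (T ⊔ K ∙ v) F := by
  rw [Submodule.disjoint_def]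
  intro x hx hxF
  obtain ⟨t, ht, w, hw, rfl⟩ := Submodule.mem_sup.1 hx
  obtain ⟨c, rfl⟩ := Submodule.mem_span_singleton.1 hw
  by_cases hc : c = 0
  · subst hc
    simp only [zero_smul, add_zero] at hxF ⊢
    exact Submodule.disjoint_def.1 h t ht hxF
  · exfalso
    apply hv
    have : c • v ∈ T ⊔ F := by
      have e : c • v = (t + c • v) - t := by abel
      rw [e]
      exact Submodule.sub_mem _ (Submodule.mem_sup_right hxF) (Submodule.mem_sup_left ht)
    exact (Submodule.smul_mem_iff _ hc).1 this

theorem aux_main {K V : Type*} [Field K]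
    [AddCommGroup V] [Module K V] [FiniteDimensional K V] {n : ℕ}
    (f : LinearMap.BilinForm K V) (hnd : f.Nondegenerate)
    (halt : ∀ v : V, f v v = 0) (hrefl : f.IsRefl)
    (hdim : Module.finrank K V = 2 * n)
    (F G : Submodule K V) (hF : finrank K F = n) (hG : finrank K G = n)
    (hFG : f.orthogonal F = G) (hGF : f.orthogonal G = F) (k : ℕ) (hk : k ≤ n) :
    ∃ T : Submodule K V, finrank K T = k ∧ (∀ x ∈ T, ∀ y ∈ T, f x y = 0) ∧
      Disjoint T F ∧ Disjoint T G := by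
  induction k with
  | zero => exact ⟨⊥, by simp, by simp, disjoint_bot_left, disjoint_bot_left⟩
  | succ k ih =>
    obtain ⟨T, hT, hiso, hTF, hTG⟩ := ih (by omega)
    obtain ⟨a, ha, haF⟩ := aux_step f hnd halt hrefl hdim F G T hG hFG hTG (by omega)
    obtain ⟨b, hb, hbG⟩ := aux_step f hnd halt hrefl hdim G F T hF hGF hTF (by omega)
    have hv : ∃ v ∈ f.orthogonal T, v ∉ T ⊔ F ∧ v ∉ T ⊔ G := by
      by_cases haG : a ∈ T ⊔ G
      · by_cases hbF : b ∈ T ⊔ F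
        · refine ⟨a + b, add_mem ha hb, fun h => haF ?_, fun h => hbG ?_⟩
          · simpa using sub_mem h hbF
          · simpa using sub_mem h haG
        · exact ⟨b, hb, hbF, hbG⟩
      · exact ⟨a, ha, haF, haG⟩
    obtain ⟨v, hvT, hvF, hvG⟩ := hv
    have hvnT : v ∉ T := fun h => hvF (Submodule.mem_sup_left h)
    have hv0 : v ≠ 0 := fun h => hvnT (h ▸ T.zero_mem)
    refine ⟨T ⊔ K ∙ v, ?_, ?_, aux_disj T F v hTF hvF, aux_disj T G v hTG hvG⟩
    · have h1 := Submodule.finrank_sup_add_finrank_inf_eq T (K ∙ v)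
      have h2 : T ⊓ K ∙ v = ⊥ := by
        exact ((Submodule.disjoint_span_singleton' hv0).2 hvnT).eq_bot
      rw [h2, finrank_bot, finrank_span_singleton hv0] at h1
      omega
    · intro x hx y hy
      obtain ⟨t, ht, w, hw, rfl⟩ := Submodule.mem_sup.1 hx
      obtain ⟨c, rfl⟩ := Submodule.mem_span_singleton.1 hw
      obtain ⟨s, hs, w, hw, rfl⟩ := Submodule.mem_sup.1 hy
      obtain ⟨d, rfl⟩ := Submodule.mem_span_singleton.1 hw
      have e1 : f t v = 0 := (LinearMap.BilinForm.mem_orthogonal_iff.1 hvT) t ht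
      have e2 : f v s = 0 := hrefl _ _ ((LinearMap.BilinForm.mem_orthogonal_iff.1 hvT) s hs)
      simp [e1, e2, hiso t ht s hs, halt]

theorem exists_totally_degenerate_anti_invariant {K V : Type*} [Field K]
    [AddCommGroup V] [Module K V] [FiniteDimensional K V] {n : ℕ}
    (f : LinearMap.BilinForm K V) (hnd : f.Nondegenerate)
    (halt : ∀ v : V, f v v = 0)
    (hdim : Module.finrank K V = 2 * n)
    (φ : V ≃ₗ[K] V) (hφ : ∀ x y : V, f (φ x) (φ y) = f x y)
    (hfix : Module.finrank K (LinearMap.ker (φ.toLinearMap - LinearMap.id)) = n) :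
    ∃ T : Submodule K V, Module.finrank K T = n ∧
      (∀ x ∈ T, ∀ y ∈ T, f x y = 0) ∧
      T ⊓ T.map φ.toLinearMap = ⊥ ∧ T ⊔ T.map φ.toLinearMap = ⊤ := by
  have hrefl : f.IsRefl := LinearMap.BilinForm.IsAlt.isRefl halt
  set F := LinearMap.ker (φ.toLinearMap - LinearMap.id) with hFdef
  have hG := LinearMap.BilinForm.finrank_orthogonal hnd F
  obtain ⟨T, hT, hiso, hTF, hTG⟩ := aux_main f hnd halt hrefl hdim F (f.orthogonal F) hfix
    (by omega) rfl (LinearMap.BilinForm.orthogonal_orthogonal hnd hrefl F) n le_rfl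
  have hbot : T ⊓ T.map φ.toLinearMap = ⊥ := by
    rw [eq_bot_iff]
    rintro x ⟨hx, t, ht, rfl⟩
    have ht' : φ t ∈ T := hx
    have h1 : φ t - t ∈ f.orthogonal F := by
      rw [LinearMap.BilinForm.mem_orthogonal_iff]
      intro y hy
      have hy' : φ y = y := by
        have := LinearMap.mem_ker.1 hy
        simpa [sub_eq_zero] using this
      change f y (φ t - t) = 0
      have := hφ y t
      rw [hy'] at this
      simp [this]
    have h2 : φ t - t = 0 := Submodule.disjoint_def.1 hTG _ (sub_mem ht' ht) h1
    have h3 : t ∈ F := by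
      rw [hFdef, LinearMap.mem_ker]
      simpa using h2
    have h4 : t = 0 := Submodule.disjoint_def.1 hTF _ ht h3
    simp [h4]
  refine ⟨T, hT, hiso, hbot, ?_⟩
  apply Submodule.eq_top_of_finrank_eq
  have h1 := Submodule.finrank_sup_add_finrank_inf_eq T (T.map φ.toLinearMap)
  have h2 : finrank K (T.map φ.toLinearMap) = finrank K T := LinearEquiv.finrank_map_eq φ T
  rw [hbot, finrank_bot] at h1
  omega
end
end

section
/- Let K be a field of characteristic 2 and P ∈ Sp(4, K) a nonscalar matrix. Then there exists Q ∈ Sp(4, K) such that the upper-left 2×2 block A of Q P Q⁻¹ satisfies one of the following: (a) A is a transvection (A ≠ I₂, (A − I₂)² = 0, rank(A − I₂) = 1), or (b) A is invertible and nonprimary with det A = 1 (its characteristic polynomial is a product of two coprime nonconstant monic polynomials). -/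
open Matrix Polynomial

noncomputable section

/-- The standard symplectic form matrix `G = [[0, Iₙ], [-Iₙ, 0]]`. -/
def sympJ (n : ℕ) (K : Type*) [Field K] : Matrix (Fin n ⊕ Fin n) (Fin n ⊕ Fin n) K :=
  Matrix.fromBlocks 0 1 (-1) 0

/-- Membership in the standard symplectic group `Sp(2n, K)`: `P G Pᵀ = G`. -/
def IsSymplectic {n : ℕ} {K : Type*} [Field K]
    (P : Matrix (Fin n ⊕ Fin n) (Fin n ⊕ Fin n) K) : Prop :=
  P * sympJ n K * Pᵀ = sympJ n K

set_option linter.unusedSimpArgs false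
set_option linter.unusedSectionVars false

section CornerAux

variable {K V : Type*} [Field K] [AddCommGroup V] [Module K V]

/-- Existence of a symplectic basis in which the corner of `P` is of the desired shape. -/
def GoodBasis (w : V →ₗ[K] V →ₗ[K] K) (P : V →ₗ[K] V) : Prop :=
  ∃ e1 e2 f1 f2 : V, w e1 e2 = 0 ∧ w f1 f2 = 0 ∧ w e1 f1 = 1 ∧ w e2 f2 = 1 ∧ w e1 f2 = 0 ∧
    w e2 f1 = 0 ∧ w (P e2) f1 = 0 ∧
    ((w (P e1) f1 = 1 ∧ w (P e2) f2 = 1 ∧ w (P e1) f2 ≠ 0) ∨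
      ∃ l : K, l ≠ 0 ∧ l ≠ 1 ∧ w (P e1) f1 = l ∧ w (P e2) f2 = l⁻¹)

lemma good_general
    (w : V →ₗ[K] V →ₗ[K] K) (P : V →ₗ[K] V) (h2 : (2 : K) = 0)
    (ha : ∀ x, w x x = 0) (hs : ∀ x y, w x y = w y x) (hp : ∀ x y, w (P x) (P y) = w x y)
    (x y : V) (hxy : w x y = 0)
    (hd : w (P x) x * w (P y) y - w (P x) y * w (P y) x ≠ 0)
    (hT : w (P x) y = w (P y) x + w (P y) y) : GoodBasis w P := by
  obtain ⟨p, hpp⟩ : ∃ p, p = w (P x) x := ⟨_, rfl⟩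
  obtain ⟨q, hq⟩ : ∃ p, p = w (P x) y := ⟨_, rfl⟩
  obtain ⟨r, hr⟩ : ∃ p, p = w (P y) x := ⟨_, rfl⟩
  obtain ⟨s, hss⟩ : ∃ p, p = w (P y) y := ⟨_, rfl⟩
  have hyx : w y x = 0 := by rw [hs, hxy]
  have e1 : w x (P x) = p := by rw [hs, hpp]
  have e2 : w x (P y) = r := by rw [hs, hr]
  have e3 : w y (P x) = q := by rw [hs, hq]
  have e4 : w y (P y) = s := by rw [hs, hss]
  rw [← hpp, ← hq, ← hr, ← hss] at hd
  rw [← hq, ← hr, ← hss] at hT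
  obtain ⟨d, hdd⟩ : ∃ d, d = p * s - q * r := ⟨_, rfl⟩
  rw [← hdd] at hd
  -- r-coefficients: inverse of the Gram matrix; s-coefficients: T^t times inverse transpose
  refine ⟨x, y, d⁻¹ • (s • x - r • y + s • P x - q • P y),
    d⁻¹ • ((s - q) • x + (p - r) • y - r • P x + p • P y), ?_⟩
  refine ⟨hxy, ?_, ?_, ?_, ?_, ?_, ?_, Or.inl ⟨?_, ?_, ?_⟩⟩ <;>
    simp only [map_add, map_sub, map_smul, LinearMap.add_apply, LinearMap.sub_apply,
      LinearMap.smul_apply, smul_eq_mul, ha, hp, hxy, hyx, e1, e2, e3, e4, ← hpp, ← hq, ← hr, ← hss]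
  all_goals grind

lemma good_diag
    (w : V →ₗ[K] V →ₗ[K] K) (P : V →ₗ[K] V) (h2 : (2 : K) = 0)
    (ha : ∀ x, w x x = 0) (hs : ∀ x y, w x y = w y x) (hp : ∀ x y, w (P x) (P y) = w x y)
    (x y : V) (hxy : w x y = 0) (l : K) (hl : l ≠ 0) (hl1 : l ≠ 1)
    (hx : w (P x) x ≠ 0) (hy : w (P y) y ≠ 0)
    (h12 : w (P x) y = 0) (h21 : w (P y) x = 0) : GoodBasis w P := by
  obtain ⟨p, hpp⟩ : ∃ p, p = w (P x) x := ⟨_, rfl⟩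
  obtain ⟨s, hss⟩ : ∃ p, p = w (P y) y := ⟨_, rfl⟩
  have hyx : w y x = 0 := by rw [hs, hxy]
  have e1 : w x (P x) = p := by rw [hs, hpp]
  have e2 : w x (P y) = 0 := by rw [hs, h21]
  have e3 : w y (P x) = 0 := by rw [hs, h12]
  have e4 : w y (P y) = s := by rw [hs, hss]
  rw [← hpp] at hx
  rw [← hss] at hy
  refine ⟨x, y, p⁻¹ • (l • x + P x), s⁻¹ • (l⁻¹ • y + P y), ?_⟩
  refine ⟨hxy, ?_, ?_, ?_, ?_, ?_, ?_, Or.inr ⟨l, hl, hl1, ?_, ?_⟩⟩ <;>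
    simp only [map_add, map_sub, map_smul, LinearMap.add_apply, LinearMap.sub_apply,
      LinearMap.smul_apply, smul_eq_mul, ha, hp, hxy, hyx, e1, e2, e3, e4, ← hpp, h12, h21, ← hss]
  all_goals grind

lemma good_nonsymm
    (w : V →ₗ[K] V →ₗ[K] K) (P : V →ₗ[K] V) (h2 : (2 : K) = 0)
    (ha : ∀ x, w x x = 0) (hs : ∀ x y, w x y = w y x) (hp : ∀ x y, w (P x) (P y) = w x y)
    (x y : V) (hxy : w x y = 0)
    (hd : w (P x) x * w (P y) y - w (P x) y * w (P y) x ≠ 0)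
    (hT : w (P x) y ≠ w (P y) x) (hy : w (P y) y ≠ 0) : GoodBasis w P := by
  have h0 : w (P x) y - w (P y) x ≠ 0 := sub_ne_zero.2 hT
  obtain ⟨k, hk⟩ : ∃ k, k = w (P y) y / (w (P x) y - w (P y) x) := ⟨_, rfl⟩
  have hk0 : k ≠ 0 := by rw [hk]; exact div_ne_zero hy h0
  have hk1 : k * (w (P x) y - w (P y) x) = w (P y) y := by rw [hk]; field_simp
  apply good_general w P h2 ha hs hp (k • x) y
  · simp [hxy]
  · simp only [map_smul, LinearMap.smul_apply, smul_eq_mul]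
    have := mul_ne_zero (mul_ne_zero hk0 hk0) hd
    intro h
    apply mul_ne_zero hk0 hd
    apply (mul_right_inj' hk0).1
    linear_combination h
  · simp only [map_smul, LinearMap.smul_apply, smul_eq_mul]
    linear_combination hk1

lemma good_of_disjoint
    (w : V →ₗ[K] V →ₗ[K] K) (P : V →ₗ[K] V) (h2 : (2 : K) = 0)
    (ha : ∀ x, w x x = 0) (hs : ∀ x y, w x y = w y x) (hp : ∀ x y, w (P x) (P y) = w x y)
    (x y : V) (hxy : w x y = 0)
    (hd : w (P x) x * w (P y) y - w (P x) y * w (P y) x ≠ 0) : GoodBasis w P := by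
  have hyx : w y x = 0 := by rw [hs, hxy]
  have hd' : w (P y) y * w (P x) x - w (P y) x * w (P x) y ≠ 0 := by
    intro h; apply hd; linear_combination h
  by_cases hT : w (P x) y = w (P y) x
  · by_cases hy : w (P y) y = 0
    · exact good_general w P h2 ha hs hp x y hxy hd (by rw [hT, hy, add_zero])
    by_cases hx : w (P x) x = 0
    · exact good_general w P h2 ha hs hp y x hyx hd' (by rw [hT, hx, add_zero])
    obtain ⟨m, hm⟩ : ∃ m, m = w (P y) x / w (P x) x := ⟨_, rfl⟩
    have hm1 : m * w (P x) x = w (P y) x := by rw [hm]; field_simp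
    have z1 : w x (y - m • x) = 0 := by simp [hxy, ha]
    have z2 : w (P x) (y - m • x) = 0 := by
      simp only [map_sub, map_smul, smul_eq_mul]; linear_combination hT - hm1
    have z3 : w (P (y - m • x)) x = 0 := by
      simp only [map_sub, map_smul, LinearMap.sub_apply, LinearMap.smul_apply, smul_eq_mul]
      linear_combination - hm1
    have z4 : w (P (y - m • x)) (y - m • x) ≠ 0 := by
      intro h
      apply hd
      simp only [map_sub, map_smul, LinearMap.sub_apply, LinearMap.smul_apply, smul_eq_mul] at h
      grind
    by_cases hl : ∃ l : K, l ≠ 0 ∧ l ≠ 1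
    · obtain ⟨l, hl0, hl1⟩ := hl
      exact good_diag w P h2 ha hs hp x (y - m • x) z1 l hl0 hl1 hx z4 z2 z3
    · push Not at hl
      generalize y - m • x = z at z1 z2 z3 z4
      have a1 := hl _ hx
      have a2 := hl _ z4
      apply good_general w P h2 ha hs hp x (x + z)
      · simp [z1, ha]
      · simp [z2, z3, a1, a2]
      · simp only [map_add, LinearMap.add_apply, z2, z3, a1, a2]
        grind
  · by_cases hy : w (P y) y = 0
    · by_cases hx : w (P x) x = 0
      · apply good_nonsymm w P h2 ha hs hp x (x + y)
        · simp [hxy, ha]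
        · simp only [map_add, LinearMap.add_apply]
          intro h; apply hd; linear_combination h
        · simp only [map_add, LinearMap.add_apply]
          intro h; apply hT; linear_combination h
        · simp only [map_add, LinearMap.add_apply, hx, hy]
          grind
      · exact good_nonsymm w P h2 ha hs hp y x hyx hd' (Ne.symm hT) hx
    · exact good_nonsymm w P h2 ha hs hp x y hxy hd hT hy

lemma good_main_aux
    (w : V →ₗ[K] V →ₗ[K] K) (P : V →ₗ[K] V) (h2 : (2 : K) = 0)
    (ha : ∀ x, w x x = 0) (hs : ∀ x y, w x y = w y x) (hp : ∀ x y, w (P x) (P y) = w x y)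
    (u v w1 w2 : V) (c g1 h1 hh2 δ : K) (hv : P u = v) (hc : w u v = c)
    (hc0 : c ≠ 0) (u1 : w u w1 = 0) (u2 : w u w2 = 0) (v1 : w v w1 = 0) (v2 : w v w2 = 0)
    (w12 : w w1 w2 = 1) (hg : w (P w1) u = c * g1) (hh1 : w (P v) w1 = h1)
    (hh2' : w (P v) w2 = hh2) (hrel : h1 = c * g1) (hδ : w (P v) u = c * δ)
    (hw11 : w (P w1) w1 = 0) (hw12 : w (P w1) w2 = 1) (hg0 : g1 ≠ 0) : GoodBasis w P := by
  have h10 : h1 ≠ 0 := by rw [hrel]; exact mul_ne_zero hc0 hg0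
  have k1 : w (P w1) v = 0 := by rw [← hv, hp, hs, u1]
  have k2 : w (P v) v = c := by
    have := hp v u
    rw [hv] at this; rw [this, hs, hc]
  have v1' : w w1 v = 0 := by rw [hs, v1]
  have v2' : w w2 v = 0 := by rw [hs, v2]
  have u1' : w w1 u = 0 := by rw [hs, u1]
  have u2' : w w2 u = 0 := by rw [hs, u2]
  have hc' : w v u = c := by rw [hs, hc]
  refine ⟨w1, v, w2 - (hh2 / h1) • w1, c⁻¹ • (u + (1 - δ) • v), ?_⟩
  refine ⟨v1', ?_, ?_, ?_, ?_, ?_, ?_, Or.inl ⟨?_, ?_, ?_⟩⟩ <;>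
    simp only [map_add, map_sub, map_smul, LinearMap.add_apply, LinearMap.sub_apply,
      LinearMap.smul_apply, smul_eq_mul, ha, hc, hc', u1, u2, v1, v2, v1', v2', u1', u2', w12,
      hg, hh1, hh2', hδ, hw11, hw12, k1, k2]
  all_goals grind

lemma good_of_nonalt
    (w : V →ₗ[K] V →ₗ[K] K) (P : V →ₗ[K] V) (h2 : (2 : K) = 0)
    (ha : ∀ x, w x x = 0) (hs : ∀ x y, w x y = w y x) (hp : ∀ x y, w (P x) (P y) = w x y)
    (u w1 w2 : V) (c : K) (hc : w u (P u) = c)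
    (hc0 : c ≠ 0) (u1 : w u w1 = 0) (u2 : w u w2 = 0) (v1 : w (P u) w1 = 0)
    (v2 : w (P u) w2 = 0) (w12 : w w1 w2 = 1)
    (hpar : ∀ z z', w z z' = c⁻¹ * (w z u * w (P u) z' + w z (P u) * w u z') +
      w z w1 * w w2 z' + w z w2 * w w1 z') : GoodBasis w P := by
  by_cases H : ∃ x y, w x y = 0 ∧ w (P x) x * w (P y) y - w (P x) y * w (P y) x ≠ 0
  · obtain ⟨x, y, hxy, hd⟩ := H
    exact good_of_disjoint w P h2 ha hs hp x y hxy hd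
  push Not at H
  have hc' : w (P u) u = c := by rw [hs, hc]
  have v1' : w w1 (P u) = 0 := by rw [hs, v1]
  have v2' : w w2 (P u) = 0 := by rw [hs, v2]
  have u1' : w w1 u = 0 := by rw [hs, u1]
  have u2' : w w2 u = 0 := by rw [hs, u2]
  have w21 : w w2 w1 = 1 := by rw [hs, w12]
  have hw : ∀ z, w u z = 0 → w (P u) z = 0 → w (P z) z = 0 := by
    intro z hz hz'
    have := H u z hz
    rw [hc', hz'] at this
    simpa [hc0] using this
  have b11 := hw w1 u1 v1
  have b22 := hw w2 u2 v2
  have b12 := hw (w1 + w2) (by simp [u1, u2]) (by simp [v1, v2])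
  simp only [map_add, LinearMap.add_apply, b11, b22] at b12
  obtain ⟨k, hk⟩ : ∃ k, k = w (P w1) w2 := ⟨_, rfl⟩
  have hk' : w (P w2) w1 = k := by grind
  have p1 : w (P w1) (P u) = 0 := by rw [hp, u1']
  have p2 : w (P w2) (P u) = 0 := by rw [hp, u2']
  have q1 : w (P w1) (P (P u)) = 0 := by rw [hp, v1']
  have q2 : w (P w2) (P (P u)) = 0 := by rw [hp, v2']
  have k2 : w (P (P u)) (P u) = c := by rw [hp, hc']
  have hk1 : k = 1 := by
    have h := hp w1 w2
    rw [hpar, w12, p1, hs (P u) (P w2), p2, hs w2 (P w2), b22, b11, ← hk, hs w1 (P w2), hk'] at h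
    have : (k - 1) ^ 2 = 0 := by linear_combination h + (1 - k) * h2
    have := pow_eq_zero_iff (two_ne_zero) |>.1 this
    linear_combination this
  subst hk1
  rw [hpar, p1, hs (P u), k2, b11, ← hk, hs w1] at q1
  rw [hpar, p2, hs (P u), k2, b22, hk', hs w2] at q2
  obtain ⟨δ, hδ⟩ : ∃ δ, w (P (P u)) u = c * δ := ⟨w (P (P u)) u / c, by field_simp⟩
  have r1 : w (P (P u)) w1 = w (P w1) u := by grind
  have r2 : w (P (P u)) w2 = w (P w2) u := by grind
  by_cases g1 : w (P w1) u = 0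
  · by_cases g2 : w (P w2) u = 0
    · rw [g1] at r1
      rw [g2] at r2
      have hδ0 : δ = 0 := by
        have := H (u + w1) (P u + c • w2) (by simp [hc, u2, v1', w12]; grind)
        simp only [map_add, map_smul, LinearMap.add_apply, LinearMap.smul_apply, smul_eq_mul,
          ha, hc, hc', u1, u2, v1, v2, v1', v2', u1', u2', w12, w21, b11, b22, ← hk, hk', p1, p2,
          k2, hδ, r1, r2, g1, g2] at this
        grind
      subst hδ0
      refine ⟨c⁻¹ • u, w1, u + P u + w1, w2 + c⁻¹ • u, ?_⟩
      refine ⟨?_, ?_, ?_, ?_, ?_, ?_, ?_, Or.inl ⟨?_, ?_, ?_⟩⟩ <;>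
        simp only [map_add, map_smul, LinearMap.add_apply, LinearMap.smul_apply, smul_eq_mul,
          ha, hc, hc', u1, u2, v1, v2, v1', v2', u1', u2', w12, w21, b11, b22, ← hk, hk', p1, p2,
          k2, hδ, r1, r2, g1, g2]
      all_goals grind
    · exact good_main_aux w P h2 ha hs hp u (P u) w2 w1 c (w (P w2) u / c) _ _ δ rfl hc hc0 u2 u1
        v2 v1 w21 (by field_simp) rfl rfl (by rw [r2]; field_simp) hδ b22 hk' (div_ne_zero g2 hc0)
  · exact good_main_aux w P h2 ha hs hp u (P u) w1 w2 c (w (P w1) u / c) _ _ δ rfl hc hc0 u1 u2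
      v1 v2 w12 (by field_simp) rfl rfl (by rw [r1]; field_simp) hδ b11 hk.symm
      (div_ne_zero g1 hc0)

end CornerAux

section CornerConcrete

variable {K : Type*} [Field K]

/-- The symplectic form as a bilinear map on row vectors. -/
def swf (K : Type*) [Field K] : (Fin 2 ⊕ Fin 2 → K) →ₗ[K] (Fin 2 ⊕ Fin 2 → K) →ₗ[K] K :=
  Matrix.toLinearMap₂' K (sympJ 2 K)

lemma swf_apply (x y : Fin 2 ⊕ Fin 2 → K) : swf K x y =
    x (Sum.inl 0) * y (Sum.inr 0) + x (Sum.inl 1) * y (Sum.inr 1)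
      - x (Sum.inr 0) * y (Sum.inl 0) - x (Sum.inr 1) * y (Sum.inl 1) := by
  simp [swf, Matrix.toLinearMap₂'_apply', sympJ, dotProduct, Matrix.mulVec, Matrix.fromBlocks,
    Fintype.sum_sum_type, Fin.sum_univ_two, Matrix.one_apply]
  ring

lemma swf_matrix (M N : Matrix (Fin 2 ⊕ Fin 2) (Fin 2 ⊕ Fin 2) K) (i j : Fin 2 ⊕ Fin 2) :
    (M * sympJ 2 K * Nᵀ) i j = swf K (M i) (N j) := by
  rw [swf, Matrix.toLinearMap₂'_apply', Matrix.mul_assoc]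
  rfl

lemma swf_vecMul (P : Matrix (Fin 2 ⊕ Fin 2) (Fin 2 ⊕ Fin 2) K) (hP : IsSymplectic P)
    (x y : Fin 2 ⊕ Fin 2 → K) :
    swf K (P.vecMulLinear x) (P.vecMulLinear y) = swf K x y := by
  simp only [swf, Matrix.toLinearMap₂'_apply', Matrix.vecMulLinear_apply]
  conv_rhs => rw [← hP]
  rw [← Matrix.dotProduct_mulVec, ← Matrix.mulVec_transpose P y, Matrix.mulVec_mulVec,
    Matrix.mulVec_mulVec, Matrix.mul_assoc]

lemma sympJ_sq : sympJ 2 K * sympJ 2 K = -1 := by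
  simp [sympJ, Matrix.fromBlocks_multiply, ← Matrix.fromBlocks_one, Matrix.fromBlocks_neg]

lemma symp_inv (Q : Matrix (Fin 2 ⊕ Fin 2) (Fin 2 ⊕ Fin 2) K) (hQ : IsSymplectic Q) :
    Q * (-(sympJ 2 K * Qᵀ * sympJ 2 K)) = 1 := by
  have h : Q * sympJ 2 K * Qᵀ = sympJ 2 K := hQ
  rw [Matrix.mul_neg, ← Matrix.mul_assoc, ← Matrix.mul_assoc, h, sympJ_sq, neg_neg]

/-- The matrix with given rows. -/
def rowMat (e1 e2 f1 f2 : Fin 2 ⊕ Fin 2 → K) : Matrix (Fin 2 ⊕ Fin 2) (Fin 2 ⊕ Fin 2) K :=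
  Matrix.of (Sum.elim ![e1, e2] ![f1, f2])

lemma rowMat_l0 (e1 e2 f1 f2 : Fin 2 ⊕ Fin 2 → K) : rowMat e1 e2 f1 f2 (Sum.inl 0) = e1 := rfl
lemma rowMat_l1 (e1 e2 f1 f2 : Fin 2 ⊕ Fin 2 → K) : rowMat e1 e2 f1 f2 (Sum.inl 1) = e2 := rfl
lemma rowMat_r0 (e1 e2 f1 f2 : Fin 2 ⊕ Fin 2 → K) : rowMat e1 e2 f1 f2 (Sum.inr 0) = f1 := rfl
lemma rowMat_r1 (e1 e2 f1 f2 : Fin 2 ⊕ Fin 2 → K) : rowMat e1 e2 f1 f2 (Sum.inr 1) = f2 := rfl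

lemma rowMat_symp (hs : ∀ x y, swf K x y = swf K y x) (ha : ∀ x, swf K x x = 0)
    (h2 : (2 : K) = 0) (e1 e2 f1 f2 : Fin 2 ⊕ Fin 2 → K)
    (h1 : swf K e1 e2 = 0) (h3 : swf K f1 f2 = 0) (h4 : swf K e1 f1 = 1)
    (h5 : swf K e2 f2 = 1) (h6 : swf K e1 f2 = 0) (h7 : swf K e2 f1 = 0) :
    IsSymplectic (rowMat e1 e2 f1 f2) := by
  have hn : (1 : K) = -1 := by linear_combination h2
  unfold IsSymplectic
  ext i j
  rw [swf_matrix]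
  rcases i with i | i <;> rcases j with j | j <;> fin_cases i <;> fin_cases j <;>
    simp [rowMat_l0, rowMat_l1, rowMat_r0, rowMat_r1, sympJ, ha, h1, h3, h4, h5, h6, h7, hs e2 e1, hs f2 f1, hs f1 e1, hs f2 e2,
      hs f1 e2, hs f2 e1, ← hn]

lemma parseval (hs : ∀ x y, swf K x y = swf K y x) (ha : ∀ x, swf K x x = 0)
    (h2 : (2 : K) = 0) (e1 e2 f1 f2 : Fin 2 ⊕ Fin 2 → K)
    (h1 : swf K e1 e2 = 0) (h3 : swf K f1 f2 = 0) (h4 : swf K e1 f1 = 1)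
    (h5 : swf K e2 f2 = 1) (h6 : swf K e1 f2 = 0) (h7 : swf K e2 f1 = 0)
    (z z' : Fin 2 ⊕ Fin 2 → K) :
    swf K z z' = swf K z e1 * swf K f1 z' + swf K z f1 * swf K e1 z' +
      swf K z e2 * swf K f2 z' + swf K z f2 * swf K e2 z' := by
  have hQ := rowMat_symp hs ha h2 e1 e2 f1 f2 h1 h3 h4 h5 h6 h7
  obtain ⟨Q, hQd⟩ : ∃ Q, Q = rowMat e1 e2 f1 f2 := ⟨_, rfl⟩
  rw [← hQd] at hQ
  have hI := mul_eq_one_comm.1 (symp_inv Q hQ)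
  rw [Matrix.neg_mul] at hI
  have hI' : sympJ 2 K * Qᵀ * sympJ 2 K * Q * sympJ 2 K = - sympJ 2 K := by
    rw [neg_eq_iff_eq_neg.1 hI, Matrix.neg_mul, Matrix.one_mul]
  obtain ⟨M, hM⟩ : ∃ M : Matrix (Fin 2 ⊕ Fin 2) (Fin 2 ⊕ Fin 2) K,
    M = rowMat z 0 0 0 := ⟨_, rfl⟩
  obtain ⟨N, hN⟩ : ∃ M : Matrix (Fin 2 ⊕ Fin 2) (Fin 2 ⊕ Fin 2) K,
    M = rowMat z' 0 0 0 := ⟨_, rfl⟩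
  have key : (M * sympJ 2 K * Qᵀ) * sympJ 2 K * (Q * sympJ 2 K * Nᵀ)
      = - (M * sympJ 2 K * Nᵀ) := by
    have : (M * sympJ 2 K * Qᵀ) * sympJ 2 K * (Q * sympJ 2 K * Nᵀ)
      = M * (sympJ 2 K * Qᵀ * sympJ 2 K * Q * sympJ 2 K) * Nᵀ := by
      simp only [Matrix.mul_assoc]
    rw [this, hI']
    simp
  have k := congrFun (congrFun key (Sum.inl 0)) (Sum.inl 0)
  rw [Matrix.neg_apply, swf_matrix, Matrix.mul_apply] at k
  simp only [Matrix.mul_apply (M := M * sympJ 2 K * Qᵀ), swf_matrix, Fintype.sum_sum_type, Fin.sum_univ_two] at k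
  simp [sympJ, hM, hN, hQd, rowMat_l0, rowMat_l1, rowMat_r0, rowMat_r1] at k
  linear_combination k - (swf K z e1 * swf K f1 z' + swf K z e2 * swf K f2 z') * h2

lemma exists_compl (hs : ∀ x y, swf K x y = swf K y x) (ha : ∀ x, swf K x x = 0)
    (h2 : (2 : K) = 0) (u v : Fin 2 ⊕ Fin 2 → K) (c : K) (hc : swf K u v = c) (hc0 : c ≠ 0) :
    ∃ w1 w2, swf K u w1 = 0 ∧ swf K u w2 = 0 ∧ swf K v w1 = 0 ∧ swf K v w2 = 0 ∧
      swf K w1 w2 = 1 := by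
  have hc' : swf K v u = c := by rw [hs, hc]
  have main : ∃ x y, c * swf K x y + swf K x v * swf K u y + swf K x u * swf K v y ≠ 0 := by
    by_contra! H
    have a1 := H (Pi.single (Sum.inl 0) 1) (Pi.single (Sum.inl 1) 1)
    have a2 := H (Pi.single (Sum.inl 0) 1) (Pi.single (Sum.inr 0) 1)
    have a3 := H (Pi.single (Sum.inl 0) 1) (Pi.single (Sum.inr 1) 1)
    have a4 := H (Pi.single (Sum.inl 1) 1) (Pi.single (Sum.inr 0) 1)
    have a5 := H (Pi.single (Sum.inl 1) 1) (Pi.single (Sum.inr 1) 1)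
    have a6 := H (Pi.single (Sum.inr 0) 1) (Pi.single (Sum.inr 1) 1)
    clear H hc hc'
    simp [swf_apply] at a1 a2 a3 a4 a5 a6
    grind
  obtain ⟨x, y, hxy⟩ := main
  obtain ⟨d, hd⟩ : ∃ d, d = c * swf K x y + swf K x v * swf K u y + swf K x u * swf K v y :=
    ⟨_, rfl⟩
  rw [← hd] at hxy
  refine ⟨(c / d) • (x + (c⁻¹ * swf K x v) • u + (c⁻¹ * swf K x u) • v),
    y + (c⁻¹ * swf K v y) • u + (c⁻¹ * swf K u y) • v, ?_, ?_, ?_, ?_, ?_⟩ <;>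
  simp only [map_add, map_smul, LinearMap.add_apply, LinearMap.smul_apply, smul_eq_mul,
      ha, hc, hc', hs u x, hs v x]
  all_goals grind

lemma good_concrete [CharP K 2] (P : Matrix (Fin 2 ⊕ Fin 2) (Fin 2 ⊕ Fin 2) K)
    (hP : IsSymplectic P)
    (hns : ∀ c : K, P ≠ c • (1 : Matrix (Fin 2 ⊕ Fin 2) (Fin 2 ⊕ Fin 2) K))
    (h2 : (2 : K) = 0) (hs : ∀ x y, swf K x y = swf K y x) (ha : ∀ x, swf K x x = 0) :
    GoodBasis (swf K) P.vecMulLinear := by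
  have hp := swf_vecMul P hP
  by_cases H : ∃ u, swf K u (P.vecMulLinear u) ≠ 0
  · obtain ⟨u, hu⟩ := H
    obtain ⟨c, hc⟩ : ∃ c, swf K u (P.vecMulLinear u) = c := ⟨_, rfl⟩
    rw [hc] at hu
    obtain ⟨w1, w2, u1, u2, v1, v2, w12⟩ := exists_compl hs ha h2 u _ c hc hu
    apply good_of_nonalt (swf K) P.vecMulLinear h2 ha hs hp u w1 w2 c hc hu u1 u2 v1 v2 w12
    intro z z'
    have := parseval hs ha h2 u w1 (c⁻¹ • P.vecMulLinear u) w2 u1 (by simp only [map_smul, LinearMap.smul_apply, v2, smul_zero])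
      (by simp only [map_smul, hc, smul_eq_mul]; field_simp) w12 u2
      (by simp only [map_smul, hs w1 (P.vecMulLinear u), v1, smul_zero]) z z'
    rw [this]
    simp only [map_smul, LinearMap.smul_apply, smul_eq_mul]
    ring
  · push Not at H
    by_contra hG
    have hsym : ∀ x y, swf K (P.vecMulLinear x) y = swf K (P.vecMulLinear y) x := by
      intro x y
      have h := H (x + y)
      simp only [map_add, LinearMap.add_apply, H] at h
      rw [hs _ y, hs _ x]
      linear_combination h - swf K x (P.vecMulLinear y) * h2
    have hz : ∀ x y, swf K x y = 0 → swf K (P.vecMulLinear x) y = 0 := by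
      intro x y hxy
      by_contra hne
      apply hG
      apply good_of_disjoint (swf K) P.vecMulLinear h2 ha hs hp x y hxy
      rw [hs _ x, H, ← hsym x y]
      simpa using hne
    have c1 := hz (Pi.single (Sum.inl 0) 1 + Pi.single (Sum.inl 1) 1)
      (Pi.single (Sum.inr 0) 1 + Pi.single (Sum.inr 1) 1) (by simp [swf_apply]; grind)
    have c2 := hz (Pi.single (Sum.inl 0) 1 + Pi.single (Sum.inr 1) 1)
      (Pi.single (Sum.inr 0) 1 + Pi.single (Sum.inl 1) 1) (by simp [swf_apply])
    have c3 := hz (Pi.single (Sum.inl 0) 1 + Pi.single (Sum.inr 0) 1)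
      (Pi.single (Sum.inl 0) 1 + Pi.single (Sum.inr 0) 1) (ha _)
    apply hns (P (Sum.inl 0) (Sum.inl 0))
    simp [swf_apply, Matrix.add_vecMul] at c1 c2 c3
    have d_l0_l0 := hz (Pi.single (Sum.inl 0) 1) (Pi.single (Sum.inl 0) 1) (by simp [swf_apply])
    have d_l0_l1 := hz (Pi.single (Sum.inl 0) 1) (Pi.single (Sum.inl 1) 1) (by simp [swf_apply])
    have d_l0_r1 := hz (Pi.single (Sum.inl 0) 1) (Pi.single (Sum.inr 1) 1) (by simp [swf_apply])
    have d_l1_l0 := hz (Pi.single (Sum.inl 1) 1) (Pi.single (Sum.inl 0) 1) (by simp [swf_apply])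
    have d_l1_l1 := hz (Pi.single (Sum.inl 1) 1) (Pi.single (Sum.inl 1) 1) (by simp [swf_apply])
    have d_l1_r0 := hz (Pi.single (Sum.inl 1) 1) (Pi.single (Sum.inr 0) 1) (by simp [swf_apply])
    have d_r0_l1 := hz (Pi.single (Sum.inr 0) 1) (Pi.single (Sum.inl 1) 1) (by simp [swf_apply])
    have d_r0_r0 := hz (Pi.single (Sum.inr 0) 1) (Pi.single (Sum.inr 0) 1) (by simp [swf_apply])
    have d_r0_r1 := hz (Pi.single (Sum.inr 0) 1) (Pi.single (Sum.inr 1) 1) (by simp [swf_apply])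
    have d_r1_l0 := hz (Pi.single (Sum.inr 1) 1) (Pi.single (Sum.inl 0) 1) (by simp [swf_apply])
    have d_r1_r0 := hz (Pi.single (Sum.inr 1) 1) (Pi.single (Sum.inr 0) 1) (by simp [swf_apply])
    have d_r1_r1 := hz (Pi.single (Sum.inr 1) 1) (Pi.single (Sum.inr 1) 1) (by simp [swf_apply])
    simp [swf_apply] at d_l0_l0 d_l0_l1 d_l0_r1 d_l1_l0 d_l1_l1 d_l1_r0 d_r0_l1 d_r0_r0 d_r0_r1 d_r1_l0 d_r1_r0 d_r1_r1
    ext i j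
    rcases i with i | i <;> rcases j with j | j <;> fin_cases i <;> fin_cases j <;>
        simp [Matrix.one_apply]
    all_goals grind

lemma finish [CharP K 2] (P : Matrix (Fin 2 ⊕ Fin 2) (Fin 2 ⊕ Fin 2) K)
    (h2 : (2 : K) = 0) (hs : ∀ x y, swf K x y = swf K y x) (ha : ∀ x, swf K x x = 0)
    (hG : GoodBasis (swf K) P.vecMulLinear) :
    ∃ Q : Matrix (Fin 2 ⊕ Fin 2) (Fin 2 ⊕ Fin 2) K, IsSymplectic Q ∧
      (IsTransvection ((Q * P * Q⁻¹).toBlocks₁₁) ∨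
        (IsUnit ((Q * P * Q⁻¹).toBlocks₁₁).det ∧
          IsNonprimary ((Q * P * Q⁻¹).toBlocks₁₁) ∧
          ((Q * P * Q⁻¹).toBlocks₁₁).det = 1)) := by
  obtain ⟨e1, e2, f1, f2, h1, h3, h4, h5, h6, h7, h8, hor⟩ := hG
  have hQ := rowMat_symp hs ha h2 e1 e2 f1 f2 h1 h3 h4 h5 h6 h7
  refine ⟨_, hQ, ?_⟩
  have hblock : (rowMat e1 e2 f1 f2 * P * (rowMat e1 e2 f1 f2)⁻¹).toBlocks₁₁ =
      !![swf K (P.vecMulLinear e1) f1, swf K (P.vecMulLinear e1) f2;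
        swf K (P.vecMulLinear e2) f1, swf K (P.vecMulLinear e2) f2] := by
    rw [Matrix.inv_eq_right_inv (symp_inv _ hQ)]
    have : rowMat e1 e2 f1 f2 * P * -(sympJ 2 K * (rowMat e1 e2 f1 f2)ᵀ * sympJ 2 K) =
      - (((rowMat e1 e2 f1 f2 * P) * sympJ 2 K * (rowMat e1 e2 f1 f2)ᵀ) * sympJ 2 K) := by
      simp only [Matrix.mul_assoc, Matrix.mul_neg]
    rw [this]
    have hrow : ∀ i, (rowMat e1 e2 f1 f2 * P) i = P.vecMulLinear (rowMat e1 e2 f1 f2 i) := by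
      intro i; rfl
    ext i j
    rw [Matrix.toBlocks₁₁, Matrix.of_apply, Matrix.neg_apply, Matrix.mul_apply]
    simp only [swf_matrix, hrow, Fintype.sum_sum_type, Fin.sum_univ_two]
    fin_cases i <;> fin_cases j <;> simp [sympJ, rowMat_l0, rowMat_l1, rowMat_r0, rowMat_r1]
  rw [hblock, h8]
  rcases hor with ⟨g1, g2, g3⟩ | ⟨l, hl, hl1, g1, g2⟩
  · left
    rw [g1, g2]
    generalize swf K (P.vecMulLinear e1) f2 = k at g3
    have hsub : !![1, k; 0, 1] - (1 : Matrix (Fin 2) (Fin 2) K) = !![0, k; 0, 0] := by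
      ext i j; fin_cases i <;> fin_cases j <;> simp
    have hne : !![0, k; 0, 0] ≠ (0 : Matrix (Fin 2) (Fin 2) K) := by
      intro h
      exact g3 (by simpa using congrFun (congrFun h 0) 1)
    refine ⟨?_, ?_, ?_⟩
    · rw [← sub_ne_zero, hsub]; exact hne
    · rw [hsub]
      ext i j; fin_cases i <;> fin_cases j <;> simp [Matrix.mul_apply]
    · rw [hsub]
      apply le_antisymm
      · have : !![0, k; 0, 0] = Matrix.vecMulVec ![k, 0] ![0, 1] := by
          ext i j; fin_cases i <;> fin_cases j <;> simp [Matrix.vecMulVec]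
        rw [this]
        exact Matrix.rank_vecMulVec_le _ _
      · rw [Nat.one_le_iff_ne_zero]
        intro h
        rw [Matrix.rank, Submodule.finrank_eq_zero, LinearMap.range_eq_bot] at h
        apply hne
        apply Matrix.ext_of_mulVec_single
        intro i
        rw [Matrix.zero_mulVec]
        simpa [Matrix.zero_mulVec] using LinearMap.congr_fun h (Pi.single i 1)
  · right
    rw [g1, g2]
    generalize swf K (P.vecMulLinear e1) f2 = k
    have hdet : (!![l, k; 0, l⁻¹] : Matrix (Fin 2) (Fin 2) K).det = 1 := by
      simp [Matrix.det_fin_two, hl]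
    refine ⟨by rw [hdet]; exact isUnit_one, ⟨X - C l, X - C l⁻¹, monic_X_sub_C _, monic_X_sub_C _,
      by simp, by simp, ?_, ?_⟩, hdet⟩
    · apply Polynomial.isCoprime_X_sub_C_of_isUnit_sub
      rw [isUnit_iff_ne_zero, sub_ne_zero]
      intro h
      have : (l - 1) ^ 2 = 0 := by
        have : l * l = 1 := by nth_rewrite 2 [h]; field_simp
        linear_combination this + (1 - l) * h2
      have := pow_eq_zero_iff (two_ne_zero) |>.1 this
      exact hl1 (sub_eq_zero.1 this)
    · rw [Matrix.charpoly_fin_two, hdet]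
      have : C l * C l⁻¹ = (1 : K[X]) := by rw [← C_mul, mul_inv_cancel₀ hl, C_1]
      simp only [Matrix.trace_fin_two, Matrix.of_apply, Matrix.cons_val', Matrix.cons_val_zero,
        Matrix.cons_val_one, Matrix.cons_val_fin_one, C_add, C_1]
      linear_combination -this

end CornerConcrete

theorem principal_corner_sp4_char_two {K : Type*} [Field K] [CharP K 2]
    (P : Matrix (Fin 2 ⊕ Fin 2) (Fin 2 ⊕ Fin 2) K) (hP : IsSymplectic P)
    (hns : ∀ c : K, P ≠ c • (1 : Matrix (Fin 2 ⊕ Fin 2) (Fin 2 ⊕ Fin 2) K)) :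
    ∃ Q : Matrix (Fin 2 ⊕ Fin 2) (Fin 2 ⊕ Fin 2) K, IsSymplectic Q ∧
      (IsTransvection ((Q * P * Q⁻¹).toBlocks₁₁) ∨
        (IsUnit ((Q * P * Q⁻¹).toBlocks₁₁).det ∧
          IsNonprimary ((Q * P * Q⁻¹).toBlocks₁₁) ∧
          ((Q * P * Q⁻¹).toBlocks₁₁).det = 1)) := by
  have h2 : (2 : K) = 0 := CharP.cast_eq_zero K 2
  have ha : ∀ x, swf K x x = 0 := by
    intro x; rw [swf_apply]; ring
  have hs : ∀ x y, swf K x y = swf K y x := by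
    intro x y
    rw [swf_apply, swf_apply]
    linear_combination (x (Sum.inl 0) * y (Sum.inr 0) + x (Sum.inl 1) * y (Sum.inr 1)
      - x (Sum.inr 0) * y (Sum.inl 0) - x (Sum.inr 1) * y (Sum.inl 1)) * h2
  exact finish P h2 hs ha (good_concrete P hP hns h2 hs ha)
end
end

section
/- Let K be a field of characteristic 2, n ≥ 2, and P ∈ Sp(2n, K) a nonscalar matrix. Then there exists Q ∈ Sp(2n, K) such that the upper-left n×n block of Q P Q⁻¹ equals the identity matrix Iₙ. -/
open Matrix

noncomputable section

set_option linter.unusedSectionVars false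

open Polynomial

/-- A symplectic space with a symplectic operator `P` whose inverse is `Q`. -/
structure SD (K V : Type*) [Field K] [AddCommGroup V] [Module K V] where
  B : V →ₗ[K] V →ₗ[K] K
  P : V →ₗ[K] V
  Q : V →ₗ[K] V
  alt : ∀ x, B x x = 0
  nd : ∀ x, (∀ y, B x y = 0) → x = 0
  adj : ∀ x y, B (P x) y = B x (Q y)
  PQ : ∀ x, P (Q x) = x
  QP : ∀ x, Q (P x) = x

namespace SD

section basic
variable {K V : Type*} [Field K] [CharP K 2] [AddCommGroup V] [Module K V] (d : SD K V)

theorem vadd_self (K : Type*) {V : Type*} [Field K] [CharP K 2] [AddCommGroup V] [Module K V] (x : V) : x + x = 0 := by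
  have : (2 : K) = 0 := CharTwo.two_eq_zero
  rw [← two_smul K x, this, zero_smul]

theorem eq_of_vadd (K : Type*) {V : Type*} [Field K] [CharP K 2] [AddCommGroup V] [Module K V] {x y : V} (h : x + y = 0) : x = y := by
  have h2 := vadd_self K y
  have : x + y = y + y := by rw [h, h2]
  exact add_right_cancel this

theorem symm (x y : V) : d.B x y = d.B y x := by
  have h := d.alt (x + y)
  simp only [map_add, LinearMap.add_apply, d.alt, zero_add, add_zero] at h
  exact (CharTwo.add_eq_zero.mp h).symm

theorem adj' (x y : V) : d.B (d.Q x) y = d.B x (d.P y) := by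
  rw [d.symm, ← d.adj, d.symm]

theorem adjR (x y : V) : d.B x (d.P y) = d.B (d.Q x) y := (d.adj' x y).symm

/-- `P + P⁻¹` -/
def S : V →ₗ[K] V := d.P + d.Q

/-- polynomial in `S` -/
def ev (p : K[X]) : V →ₗ[K] V := aeval (R := K) (A := Module.End K V) d.S p

theorem S_apply (x : V) : d.S x = d.P x + d.Q x := rfl

theorem ev_mul (p q : K[X]) (x : V) : d.ev (p * q) x = d.ev p (d.ev q x) := by
  simp [ev]
theorem ev_add (p q : K[X]) (x : V) : d.ev (p + q) x = d.ev p x + d.ev q x := by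
  simp [ev]
theorem ev_smul (c : K) (q : K[X]) (x : V) : d.ev (c • q) x = c • d.ev q x := by
  simp [ev]
theorem ev_X (x : V) : d.ev X x = d.S x := by simp [ev]
theorem ev_one (x : V) : d.ev 1 x = x := by simp [ev]
theorem ev_zero (x : V) : d.ev 0 x = 0 := by simp [ev]
theorem ev_C (c : K) (x : V) : d.ev (C c) x = c • x := by simp [ev]
theorem ev_comm (p q : K[X]) (x : V) : d.ev p (d.ev q x) = d.ev q (d.ev p x) := by
  rw [← ev_mul, mul_comm, ev_mul]

theorem ev_induction {M : K[X] → Prop} (h0 : ∀ c, M (C c)) (h1 : ∀ p q, M p → M q → M (p + q))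
    (h2 : ∀ p, M p → M (p * X)) (p : K[X]) : M p := by
  induction p using Polynomial.induction_on with
  | C a => exact h0 a
  | add p q hp hq => exact h1 p q hp hq
  | monomial n a h => rw [pow_succ, ← mul_assoc]; exact h2 _ h

theorem S_P (x : V) : d.S (d.P x) = d.P (d.S x) := by
  simp [S_apply, d.PQ, d.QP]
theorem S_Q (x : V) : d.S (d.Q x) = d.Q (d.S x) := by
  simp [S_apply, d.PQ, d.QP]
theorem S_adj (x y : V) : d.B (d.S x) y = d.B x (d.S y) := by
  simp [S_apply, d.adj, d.adj', add_comm]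
theorem ev_P (p : K[X]) : ∀ x, d.ev p (d.P x) = d.P (d.ev p x) := by
  refine ev_induction (M := fun p => ∀ x, d.ev p (d.P x) = d.P (d.ev p x)) ?_ ?_ ?_ p
  · intro c x; simp [ev_C]
  · intro p q hp hq x; simp [ev_add, hp, hq]
  · intro p hp x; simp [ev_mul, ev_X, S_P, hp]
theorem ev_Q (p : K[X]) : ∀ x, d.ev p (d.Q x) = d.Q (d.ev p x) := by
  refine ev_induction (M := fun p => ∀ x, d.ev p (d.Q x) = d.Q (d.ev p x)) ?_ ?_ ?_ p
  · intro c x; simp [ev_C]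
  · intro p q hp hq x; simp [ev_add, hp, hq]
  · intro p hp x; simp [ev_mul, ev_X, S_Q, hp]
theorem ev_adj (p : K[X]) : ∀ x y, d.B (d.ev p x) y = d.B x (d.ev p y) := by
  refine ev_induction (M := fun p => ∀ x y, d.B (d.ev p x) y = d.B x (d.ev p y)) ?_ ?_ ?_ p
  · intro c x; simp [ev_C]
  · intro p q hp hq x; simp [ev_add, hp, hq]
  · intro p hp x y; rw [ev_mul, ev_X, hp, S_adj, mul_comm, ev_mul, ev_X]

theorem S_alt (x : V) : d.B x (d.S x) = 0 := by
  rw [S_apply, map_add, ← d.adj, d.symm x (d.P x)]; exact CharTwo.add_self_eq_zero _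

theorem pow_iso (i : ℕ) : ∀ x, d.B x (d.ev (X ^ i) x) = 0 := by
  induction i using Nat.twoStepInduction with
  | zero => intro x; simp [ev_one, d.alt]
  | one => intro x; simp [ev_X, S_alt]
  | more i ih _ =>
    intro x
    rw [pow_succ', ev_mul, ← ev_adj, pow_succ, ev_mul, ev_X, ih]

theorem ev_iso1 (p : K[X]) (x : V) : d.B x (d.ev p x) = 0 := by
  induction p using Polynomial.induction_on' with
  | add p q hp hq => simp [ev_add, hp, hq]
  | monomial n a => rw [← C_mul_X_pow_eq_monomial, ev_mul, ev_C, map_smul, pow_iso, smul_zero]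

theorem ev_iso (p q : K[X]) (x : V) : d.B (d.ev p x) (d.ev q x) = 0 := by
  rw [ev_adj, ← ev_mul, ev_iso1]

theorem PP (x : V) : d.P (d.P x) = d.P (d.S x) + x := by
  rw [S_apply, map_add, PQ, add_assoc, vadd_self K, add_zero]

theorem Q_eq (x : V) : d.Q x = d.S x + d.P x := by
  rw [S_apply, add_right_comm, vadd_self K, zero_add]

/-- invariance under `P`, `P⁻¹` -/
def Inv (U : Submodule K V) : Prop := (∀ x ∈ U, d.P x ∈ U) ∧ (∀ x ∈ U, d.Q x ∈ U)
/-- nondegeneracy of a subspace -/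
def ND (U : Submodule K V) : Prop := ∀ x ∈ U, (∀ y ∈ U, d.B x y = 0) → x = 0
/-- good Lagrangian -/
structure Good (L : Submodule K V) : Prop where
  sinv : ∀ x ∈ L, d.S x ∈ L
  iso : ∀ x ∈ L, ∀ y ∈ L, d.B x y = 0
  max : ∀ x, (∀ y ∈ L, d.B x y = 0) → x ∈ L
  good : ∀ x ∈ L, d.P x ∈ L → d.P x = x
/-- no proper decomposition -/
def Indec : Prop := ∀ U, d.Inv U → d.ND U → U = ⊥ ∨ U = ⊤

/-- cyclic `S`-module -/
def cyc (e : V) : Submodule K V where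
  carrier := {x | ∃ p, x = d.ev p e}
  add_mem' := by
    rintro _ _ ⟨p, rfl⟩ ⟨q, rfl⟩; exact ⟨p + q, by rw [ev_add]⟩
  zero_mem' := ⟨0, by rw [ev_zero]⟩
  smul_mem' := by
    rintro c _ ⟨p, rfl⟩; exact ⟨c • p, by rw [ev_smul]⟩

theorem mem_cyc {e x : V} : x ∈ d.cyc e ↔ ∃ p, x = d.ev p e := Iff.rfl
theorem self_mem_cyc (e : V) : e ∈ d.cyc e := ⟨1, by rw [ev_one]⟩
theorem S_mem_cyc (e x : V) (h : x ∈ d.cyc e) : d.S x ∈ d.cyc e := by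
  obtain ⟨p, rfl⟩ := h; exact ⟨X * p, by rw [ev_mul, ev_X]⟩

/-- The main criterion. -/
theorem good_of_rad (hind : d.Indec) (L : Submodule K V) (hS : ∀ x ∈ L, d.S x ∈ L)
    (hiso : ∀ x ∈ L, ∀ y ∈ L, d.B x y = 0) (hne : L ≠ ⊥)
    (hrad : ∀ x ∈ L, (∀ y ∈ L, d.B (d.P x) y = 0) → x = 0) : d.Good L := by
  have hsym : ∀ x ∈ L, ∀ y ∈ L, d.B x (d.P y) = d.B (d.P x) y := by
    intro x hx y hy
    rw [adjR, Q_eq, map_add, LinearMap.add_apply, hiso _ (hS x hx) y hy, zero_add]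
  have hU : L ⊔ L.map d.P = ⊤ := by
    refine (hind (L ⊔ L.map d.P) ⟨?_, ?_⟩ ?_).resolve_left ?_
    · intro x hx
      obtain ⟨a, ha, _, ⟨b, hb, rfl⟩, rfl⟩ := Submodule.mem_sup.mp hx
      rw [map_add, PP]
      have h1 : d.P a + (d.P (d.S b) + b) = b + d.P (a + d.S b) := by rw [map_add]; abel
      rw [h1]
      exact Submodule.add_mem_sup hb ⟨_, L.add_mem ha (hS b hb), rfl⟩
    · intro x hx
      obtain ⟨a, ha, _, ⟨b, hb, rfl⟩, rfl⟩ := Submodule.mem_sup.mp hx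
      rw [map_add, QP, Q_eq]
      have h1 : d.S a + d.P a + b = (d.S a + b) + d.P a := by abel
      rw [h1]
      exact Submodule.add_mem_sup (L.add_mem (hS a ha) hb) ⟨_, ha, rfl⟩
    · intro x hx hxo
      obtain ⟨a, ha, _, ⟨b, hb, rfl⟩, rfl⟩ := Submodule.mem_sup.mp hx
      have hb0 : b = 0 := by
        refine hrad b hb fun y hy => ?_
        have := hxo y (Submodule.mem_sup_left hy)
        rwa [map_add, LinearMap.add_apply, hiso a ha y hy, zero_add] at this
      subst hb0
      have ha0 : a = 0 := by
        refine hrad a ha fun y hy => ?_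
        have := hxo (d.P y) (Submodule.mem_sup_right ⟨y, hy, rfl⟩)
        rwa [map_zero, add_zero, hsym a ha y hy] at this
      simp [ha0]
    · intro h; exact hne (le_bot_iff.mp (h ▸ le_sup_left))
  refine ⟨hS, hiso, ?_, ?_⟩
  · intro x hx
    have hx' : x ∈ L ⊔ L.map d.P := hU ▸ Submodule.mem_top
    obtain ⟨a, ha, _, ⟨b, hb, rfl⟩, rfl⟩ := Submodule.mem_sup.mp hx'
    have hb0 : b = 0 := by
      refine hrad b hb fun y hy => ?_
      have := hx y hy
      rwa [map_add, LinearMap.add_apply, hiso a ha y hy, zero_add] at this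
    subst hb0; simpa using ha
  · intro x hx hPx
    have : x = 0 := hrad x hx fun y hy => hiso _ hPx y hy
    simp [this]

/-- single generator case -/
theorem case_one (hind : d.Indec) (q : K[X]) (hq : Irreducible q) (k : ℕ)
    (hk : ∀ x, d.ev (q ^ (k + 1)) x = 0) (e : V) (he : d.B (d.ev (q ^ k) e) (d.P e) ≠ 0) :
    ∃ L, d.Good L := by
  refine ⟨d.cyc e, d.good_of_rad hind _ (d.S_mem_cyc e) ?_ ?_ ?_⟩
  · rintro _ ⟨p, rfl⟩ _ ⟨r, rfl⟩; exact d.ev_iso _ _ _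
  · intro h
    have := d.self_mem_cyc e
    rw [h, Submodule.mem_bot] at this
    simp [this] at he
  · rintro _ ⟨r, rfl⟩ h
    have key : ∀ j, j ≤ k + 1 → q ^ j ∣ r := by
      intro j
      induction j with
      | zero => simp
      | succ j ih =>
        intro hj
        obtain ⟨r', rfl⟩ := ih (by omega)
        rw [pow_succ]
        refine mul_dvd_mul_left _ ?_
        by_contra hnd
        obtain ⟨a, b, hab⟩ := (hq.coprime_iff_not_dvd).mpr hnd
        apply he
        have h1 : q ^ k = a * q ^ (k + 1) + (q ^ (k - j) * b) * (q ^ j * r') := by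
          calc q ^ k = q ^ k * (a * q + b * r') := by rw [hab, mul_one]
            _ = a * q ^ (k + 1) + (q ^ (k - j + j) * b) * r' := by
              rw [Nat.sub_add_cancel (by omega)]; ring
            _ = _ := by ring
        rw [h1, ev_add, ev_mul, hk, map_zero, zero_add, ev_mul, ev_adj, ev_P, adjR, Q_eq,
          map_add, LinearMap.add_apply, h _ ⟨_, rfl⟩, add_zero, ← ev_X, ← ev_mul, ev_iso]
    obtain ⟨r', rfl⟩ := key (k + 1) le_rfl
    rw [ev_mul, hk]

end basic

section nilp
variable {K V : Type*} [Field K] [CharP K 2] [AddCommGroup V] [Module K V] [FiniteDimensional K V]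
  (d : SD K V)

theorem repr_functional (f : V →ₗ[K] K) : ∃ w, ∀ x, d.B x w = f x := by
  have hinj : Function.Injective d.B := by
    rw [← LinearMap.ker_eq_bot, LinearMap.ker_eq_bot']
    intro x hx
    exact d.nd x fun y => by rw [hx]; rfl
  have hsurj : Function.Surjective d.B :=
    (LinearMap.injective_iff_surjective_of_finrank_eq_finrank
      (Subspace.dual_finrank_eq (K := K) (V := V)).symm).mp hinj
  obtain ⟨w, hw⟩ := hsurj f
  exact ⟨w, fun x => by rw [d.symm, hw]⟩

theorem exists_orth (A : Submodule K V) (y : V) (hy : y ∉ A) :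
    ∃ w, (∀ a ∈ A, d.B a w = 0) ∧ d.B y w ≠ 0 := by
  obtain ⟨f, hf, hA⟩ := Submodule.exists_le_ker_of_notMem hy
  obtain ⟨w, hw⟩ := d.repr_functional f
  exact ⟨w, fun a ha => by rw [hw]; exact hA ha, by rwa [hw]⟩

theorem evN {k : ℕ} (hk : ∀ x, d.ev (X ^ (k + 1)) x = 0) (p : K[X]) (x : V) :
    d.ev (X ^ k * p) x = p.coeff 0 • d.ev (X ^ k) x := by
  have : X ^ k * p = p.divX * X ^ (k + 1) + C (p.coeff 0) * X ^ k := by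
    conv_lhs => rw [← divX_mul_X_add p]
    ring
  rw [this, ev_add, ev_mul, hk, map_zero, zero_add, ev_mul, ev_C]

theorem SN {k : ℕ} (hk : ∀ x, d.ev (X ^ (k + 1)) x = 0) (x : V) :
    d.S (d.ev (X ^ k) x) = 0 := by
  rw [← ev_X, ← ev_mul, ← pow_succ', hk]

theorem QN {k : ℕ} (hk : ∀ x, d.ev (X ^ (k + 1)) x = 0) (x : V) :
    d.Q (d.ev (X ^ k) x) = d.P (d.ev (X ^ k) x) := by
  rw [Q_eq, d.SN hk, zero_add]

theorem PN {k : ℕ} (hk : ∀ x, d.ev (X ^ (k + 1)) x = 0) (x y : V) :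
    d.B (d.P (d.ev (X ^ k) x)) y = d.B (d.ev (X ^ k) x) (d.P y) := by
  rw [adjR, d.QN hk]

theorem PN_symm {k : ℕ} (hk : ∀ x, d.ev (X ^ (k + 1)) x = 0) (x y : V) :
    d.B (d.P (d.ev (X ^ k) x)) y = d.B (d.P (d.ev (X ^ k) y)) x := by
  rw [d.PN hk, ev_adj, ev_P, d.symm]

theorem X_pow_succ_dvd {j : ℕ} {p : K[X]} (h : p.coeff 0 = 0) : (X ^ (j + 1) : K[X]) ∣ X ^ j * p := by
  rw [pow_succ]; exact mul_dvd_mul_left _ (X_dvd_iff.mpr h)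

theorem case_b (hind : d.Indec) (k : ℕ) (hk : ∀ x, d.ev (X ^ (k + 1)) x = 0)
    (halt : ∀ e, d.B (d.ev (X ^ k) e) (d.P e) = 0)
    (e : V) (he : d.P (d.ev (X ^ k) e) ≠ d.ev (X ^ k) e) : ∃ L, d.Good L := by
  have hNe : d.ev (X ^ k) e ≠ 0 := fun h => he (by rw [h, map_zero])
  have hnot : d.Q (d.ev (X ^ k) e) ∉ d.cyc e := by
    rintro ⟨p, hp⟩
    have key : ∀ j, j ≤ k → (X ^ j : K[X]) ∣ p := by
      intro j
      induction j with
      | zero => simp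
      | succ j ih =>
        intro hj
        obtain ⟨p', rfl⟩ := ih (by omega)
        apply X_pow_succ_dvd
        have h1 : d.ev (X ^ (k - j)) (d.ev (X ^ j * p') e) = 0 := by
          rw [← hp, ev_Q, ← ev_mul, ← pow_add]
          have : k - j + k = (k - j - 1) + (k + 1) := by omega
          rw [this, pow_add, ev_mul, hk, map_zero, map_zero]
        rw [← ev_mul, ← mul_assoc, ← pow_add, Nat.sub_add_cancel (by omega), d.evN hk] at h1
        exact (smul_eq_zero.mp h1).resolve_right hNe
    obtain ⟨p', rfl⟩ := key k le_rfl
    rw [d.evN hk] at hp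
    set c := p'.coeff 0
    have hp2 := hp
    rw [d.QN hk] at hp2
    have h3 : d.ev (X ^ k) e = (c * c) • d.ev (X ^ k) e := by
      conv_lhs => rw [← d.PQ (d.ev (X ^ k) e), hp, map_smul, hp2, smul_smul]
    have h4 : (c * c + 1) • d.ev (X ^ k) e = 0 := by
      rw [add_smul, ← h3, one_smul, vadd_self K]
    have h5 := (smul_eq_zero.mp h4).resolve_right hNe
    have h6 : (c + 1) * (c + 1) = 0 := by
      have h2 : (2 : K) = 0 := CharTwo.two_eq_zero
      linear_combination h5 + c * h2
    have h7 : c = 1 := CharTwo.add_eq_zero.mp (mul_self_eq_zero.mp h6)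
    rw [h7, one_smul] at hp2
    exact he hp2
  obtain ⟨w, hwA, hw⟩ := d.exists_orth _ _ hnot
  rw [d.QN hk] at hw
  have hort : ∀ p r, d.B (d.ev p e) (d.ev r w) = 0 := by
    intro p r
    rw [← ev_adj, ← ev_mul]; exact hwA _ ⟨_, rfl⟩
  have hself : ∀ x, d.B (d.P (d.ev (X ^ k) x)) x = 0 := fun x => by rw [d.PN hk, halt]
  refine ⟨d.cyc e ⊔ d.cyc w, d.good_of_rad hind _ ?_ ?_ ?_ ?_⟩
  · intro x hx
    obtain ⟨a, ha, b, hb, rfl⟩ := Submodule.mem_sup.mp hx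
    rw [map_add]
    exact Submodule.add_mem_sup (d.S_mem_cyc _ _ ha) (d.S_mem_cyc _ _ hb)
  · intro x hx y hy
    obtain ⟨_, ⟨a, rfl⟩, _, ⟨b, rfl⟩, rfl⟩ := Submodule.mem_sup.mp hx
    obtain ⟨_, ⟨a', rfl⟩, _, ⟨b', rfl⟩, rfl⟩ := Submodule.mem_sup.mp hy
    simp only [map_add, LinearMap.add_apply, ev_iso, hort, d.symm (d.ev b w) (d.ev a' e), add_zero]
  · intro h
    have : e ∈ d.cyc e ⊔ d.cyc w := Submodule.mem_sup_left (d.self_mem_cyc e)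
    rw [h, Submodule.mem_bot] at this
    simp [this] at hNe
  · intro x hx h
    obtain ⟨_, ⟨p, rfl⟩, _, ⟨r, rfl⟩, rfl⟩ := Submodule.mem_sup.mp hx
    have key : ∀ j, j ≤ k + 1 → (X ^ j : K[X]) ∣ p ∧ (X ^ j : K[X]) ∣ r := by
      intro j
      induction j with
      | zero => simp
      | succ j ih =>
        intro hj
        obtain ⟨⟨p', rfl⟩, ⟨r', rfl⟩⟩ := ih (by omega)
        have gen : ∀ y, d.ev (X ^ (k - j)) y ∈ d.cyc e ⊔ d.cyc w →
            p'.coeff 0 * d.B (d.P (d.ev (X ^ k) e)) y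
              + r'.coeff 0 * d.B (d.P (d.ev (X ^ k) w)) y = 0 := by
          intro y hy
          have h1 := h _ hy
          rw [← ev_adj, ev_P, map_add, ← ev_mul, ← ev_mul, ← mul_assoc, ← mul_assoc, ← pow_add,
            Nat.sub_add_cancel (by omega), d.evN hk, d.evN hk] at h1
          simpa using h1
        have g1 := gen e (Submodule.mem_sup_left ⟨_, rfl⟩)
        have g2 := gen w (Submodule.mem_sup_right ⟨_, rfl⟩)
        rw [hself, mul_zero, zero_add, d.PN_symm hk] at g1
        rw [hself, mul_zero, add_zero] at g2
        exact ⟨X_pow_succ_dvd ((mul_eq_zero.mp g2).resolve_right hw),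
          X_pow_succ_dvd ((mul_eq_zero.mp g1).resolve_right hw)⟩
    obtain ⟨⟨p', rfl⟩, ⟨r', rfl⟩⟩ := key (k + 1) le_rfl
    rw [ev_mul, hk, ev_mul, hk, add_zero]

end nilp

section nilp2
variable {K V : Type*} [Field K] [CharP K 2] [AddCommGroup V] [Module K V] [FiniteDimensional K V]
  (d : SD K V)

/-- `P - 1 = P + 1` -/
def D : V →ₗ[K] V := d.P + LinearMap.id

theorem D_apply (x : V) : d.D x = d.P x + x := rfl
theorem P_eq (x : V) : d.P x = d.D x + x := by
  rw [D_apply, add_assoc, vadd_self K, add_zero]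
theorem DD (x : V) : d.D (d.D x) = d.P (d.S x) := by
  rw [D_apply, D_apply, map_add, PP]
  have : d.P (d.S x) + x + d.P x + (d.P x + x) = d.P (d.S x) + ((x + x) + (d.P x + d.P x)) := by
    abel
  rw [this, vadd_self K, vadd_self K, add_zero, add_zero]
theorem ev_D (p : K[X]) (x : V) : d.ev p (d.D x) = d.D (d.ev p x) := by
  rw [D_apply, map_add, ev_P, D_apply]

/-- the `P`-cyclic module -/
def cyc2 (z : V) : Submodule K V := d.cyc z ⊔ d.cyc (d.D z)

theorem S_mem_sup {A A' : Submodule K V} (h : ∀ x ∈ A, d.S x ∈ A) (h' : ∀ x ∈ A', d.S x ∈ A') :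
    ∀ x ∈ A ⊔ A', d.S x ∈ A ⊔ A' := by
  intro x hx
  obtain ⟨a, ha, b, hb, rfl⟩ := Submodule.mem_sup.mp hx
  rw [map_add]
  exact Submodule.add_mem_sup (h _ ha) (h' _ hb)

theorem P_mem_sup {A A' : Submodule K V} (h : ∀ x ∈ A, d.P x ∈ A) (h' : ∀ x ∈ A', d.P x ∈ A') :
    ∀ x ∈ A ⊔ A', d.P x ∈ A ⊔ A' := by
  intro x hx
  obtain ⟨a, ha, b, hb, rfl⟩ := Submodule.mem_sup.mp hx
  rw [map_add]
  exact Submodule.add_mem_sup (h _ ha) (h' _ hb)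

theorem P_mem_cyc2 (z : V) : ∀ x ∈ d.cyc2 z, d.P x ∈ d.cyc2 z := by
  intro x hx
  obtain ⟨_, ⟨a, rfl⟩, _, ⟨b, rfl⟩, rfl⟩ := Submodule.mem_sup.mp hx
  have : d.P (d.ev a z + d.ev b (d.D z))
      = d.ev (a + b * X) z + d.ev (a + b + b * X) (d.D z) := by
    rw [map_add, P_eq, P_eq, ← ev_D, ← ev_D, DD, ← ev_X, P_eq, ev_D]
    simp only [ev_add, ev_mul, map_add, ev_D]
    abel
  rw [this]
  exact Submodule.add_mem_sup ⟨_, rfl⟩ ⟨_, rfl⟩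

theorem S_mem_cyc2 (z : V) : ∀ x ∈ d.cyc2 z, d.S x ∈ d.cyc2 z :=
  d.S_mem_sup (d.S_mem_cyc _) (d.S_mem_cyc _)

theorem exists_p {k : ℕ} (hk : ∀ x, d.ev (X ^ (k + 1)) x = 0) (e w u : V)
    (hc : d.B (d.ev (X ^ k) e) w ≠ 0) :
    ∃ p, ∀ s, d.B (d.ev s e) (u + d.ev p w) = 0 := by
  have hbig : ∀ i, k + 1 ≤ i → ∀ x, d.ev (X ^ i) x = 0 := by
    intro i hi x
    rw [← Nat.sub_add_cancel hi, pow_add, ev_mul, hk, map_zero]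
  have key : ∀ j, j ≤ k + 1 → ∃ p, ∀ i, k + 1 ≤ i + j →
      d.B (d.ev (X ^ i) e) (u + d.ev p w) = 0 := by
    intro j
    induction j with
    | zero => intro _; exact ⟨0, fun i hi => by rw [hbig i (by omega)]; simp⟩
    | succ j ih =>
      intro hj
      obtain ⟨p, hp⟩ := ih (by omega)
      set c := d.B (d.ev (X ^ k) e) w with hcdef
      set t := d.B (d.ev (X ^ (k - j)) e) (u + d.ev p w) / c with ht
      refine ⟨p + C t * X ^ j, fun i hi => ?_⟩
      have h1 : d.B (d.ev (X ^ i) e) (u + d.ev (p + C t * X ^ j) w)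
          = d.B (d.ev (X ^ i) e) (u + d.ev p w) + t * d.B (d.ev (X ^ (i + j)) e) w := by
        rw [ev_add, ← add_assoc, map_add, ev_mul, ev_C, map_smul, ← ev_adj, ← ev_mul, ← pow_add,
          add_comm j i, smul_eq_mul]
      rw [h1]
      rcases Nat.lt_or_ge (i + j) (k + 1) with h | h
      · have hi' : i = k - j := by omega
        have hk' : i + j = k := by omega
        rw [hk', hi', ← hcdef, ht, div_mul_cancel₀ _ hc, CharTwo.add_self_eq_zero]
      · rw [hp i h, hbig _ h]; simp
  obtain ⟨p, hp⟩ := key (k + 1) le_rfl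
  refine ⟨p, fun s => ?_⟩
  induction s using Polynomial.induction_on' with
  | add a b ha hb => rw [ev_add, LinearMap.map_add d.B, LinearMap.add_apply, ha, hb, add_zero]
  | monomial n a =>
    rw [← C_mul_X_pow_eq_monomial, ev_mul, ev_C, map_smul, LinearMap.smul_apply, hp n (by omega),
      smul_zero]

theorem evN1 {k : ℕ} (s : K[X]) (x : V) :
    d.ev (X ^ k * s) x = s.coeff 0 • d.ev (X ^ k) x + d.ev s.divX (d.ev (X ^ (k + 1)) x) := by
  have : X ^ k * s = C (s.coeff 0) * X ^ k + s.divX * X ^ (k + 1) := by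
    conv_lhs => rw [← divX_mul_X_add s]
    ring
  rw [this, ev_add, ev_mul, ev_C, ev_mul]

theorem case_a (hind : d.Indec) (k : ℕ) (hk : ∀ x, d.ev (X ^ (k + 1)) x = 0)
    (hP : ∀ x, d.P (d.ev (X ^ k) x) = d.ev (X ^ k) x)
    (e : V) (he : d.ev (X ^ k) e ≠ 0) : ∃ L, d.Good L := by
  have hDN : ∀ x, d.D (d.ev (X ^ k) x) = 0 := fun x => by rw [D_apply, hP, vadd_self K]
  obtain ⟨w, hc⟩ : ∃ w, d.B (d.ev (X ^ k) e) w ≠ 0 := by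
    by_contra h
    push Not at h
    exact he (d.nd _ h)
  obtain ⟨p, hp⟩ := d.exists_p hk e w (d.D w) hc
  have hND : ∀ x y, d.B (d.ev (X ^ k) x) (d.D y) = 0 := by
    intro x y
    rw [D_apply, map_add, ← d.PN hk, hP, CharTwo.add_self_eq_zero]
  have hp0 : p.coeff 0 = 0 := by
    have h1 := hp (X ^ k)
    rw [map_add, hND, zero_add, ← ev_adj, ← ev_mul, mul_comm, d.evN hk, map_smul,
      LinearMap.smul_apply, smul_eq_mul] at h1
    exact (mul_eq_zero.mp h1).resolve_right hc
  obtain ⟨p', rfl⟩ := X_dvd_iff.mpr hp0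
  set c := d.B (d.ev (X ^ k) e) w with hcdef
  set w' := d.D w + d.ev (X * p') w with hw'
  have hNw' : d.ev (X ^ k) w' = 0 := by
    rw [hw', map_add, ev_D, hDN, zero_add, ← ev_mul, d.evN hk, hp0, zero_smul]
  have hort : ∀ s r, d.B (d.ev s e) (d.ev r w') = 0 := by
    intro s r
    rw [← ev_adj, ← ev_mul, hp]
  have hSL : ∀ x ∈ d.cyc e ⊔ d.cyc w', d.S x ∈ d.cyc e ⊔ d.cyc w' :=
    d.S_mem_sup (d.S_mem_cyc _) (d.S_mem_cyc _)
  have hiso : ∀ x ∈ d.cyc e ⊔ d.cyc w', ∀ y ∈ d.cyc e ⊔ d.cyc w', d.B x y = 0 := by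
    intro x hx y hy
    obtain ⟨_, ⟨a, rfl⟩, _, ⟨b, rfl⟩, rfl⟩ := Submodule.mem_sup.mp hx
    obtain ⟨_, ⟨a', rfl⟩, _, ⟨b', rfl⟩, rfl⟩ := Submodule.mem_sup.mp hy
    simp only [map_add, LinearMap.add_apply, ev_iso, hort, d.symm (d.ev b w') (d.ev a' e),
      add_zero]
  have hsymP : ∀ x ∈ d.cyc e ⊔ d.cyc w', ∀ y ∈ d.cyc e ⊔ d.cyc w',
      d.B x (d.P y) = d.B (d.P x) y := by
    intro x hx y hy
    rw [adjR, Q_eq, map_add, LinearMap.add_apply, hiso _ (hSL x hx) y hy, zero_add]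
  have hsymD : ∀ x ∈ d.cyc e ⊔ d.cyc w', ∀ y ∈ d.cyc e ⊔ d.cyc w',
      d.B x (d.D y) = d.B (d.D x) y := by
    intro x hx y hy
    rw [D_apply, D_apply, map_add, map_add, LinearMap.add_apply, hsymP x hx y hy]
  have heL : ∀ r, d.ev r e ∈ d.cyc e ⊔ d.cyc w' := fun r => Submodule.mem_sup_left ⟨_, rfl⟩
  have hwL : ∀ r, d.ev r w' ∈ d.cyc e ⊔ d.cyc w' := fun r => Submodule.mem_sup_right ⟨_, rfl⟩
  have hNwe : d.B (d.ev (X ^ k) w) e = c := by rw [ev_adj, d.symm]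
  have hNww : d.B (d.ev (X ^ k) w) w' = 0 := by rw [ev_adj, hNw', map_zero]
  -- the level `k - 1`
  have hDw : 1 ≤ k → d.D (d.ev (X ^ (k - 1)) w') = d.ev (X ^ k) w := by
    intro h1
    have hX : (X : K[X]) ^ (k - 1) * X = X ^ k := by rw [← pow_succ, Nat.sub_add_cancel h1]
    rw [hw', map_add, map_add, ev_D, DD, ← ev_X, ← ev_mul, ← ev_mul, mul_comm X, hX, hP,
      ← mul_assoc, hX, mul_comm, ev_mul, ← ev_D, hDN]
    simp
  have hDe : 1 ≤ k → d.B (d.D (d.ev (X ^ (k - 1)) e)) w' = c := by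
    intro h1
    have h2 := hsymD (d.ev (X ^ (k - 1)) e) (heL _) w'
      (Submodule.mem_sup_right (d.self_mem_cyc _))
    rw [← h2, ev_adj, ev_D, hDw h1, d.symm, hNwe]
  -- radical
  have hrad : ∀ x ∈ d.cyc e ⊔ d.cyc w', (∀ y ∈ d.cyc e ⊔ d.cyc w', d.B (d.P x) y = 0) →
      ∃ t : K, x = t • d.ev (X ^ k) e := by
    intro x hx h
    have h' : ∀ y ∈ d.cyc e ⊔ d.cyc w', d.B (d.D x) y = 0 := by
      intro y hy
      rw [D_apply, map_add, LinearMap.add_apply, h y hy, hiso x hx y hy, add_zero]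
    obtain ⟨_, ⟨s, rfl⟩, _, ⟨r, rfl⟩, rfl⟩ := Submodule.mem_sup.mp hx
    have key : ∀ j, j ≤ k → (X ^ j : K[X]) ∣ s ∧ (X ^ j : K[X]) ∣ r := by
      intro j
      induction j with
      | zero => simp
      | succ j ih =>
        intro hj
        obtain ⟨⟨s', rfl⟩, ⟨r', rfl⟩⟩ := ih (by omega)
        have hk1 : k - 1 + 1 = k := by omega
        have gen : ∀ y, d.ev (X ^ (k - 1 - j)) y ∈ d.cyc e ⊔ d.cyc w' →
            s'.coeff 0 * d.B (d.D (d.ev (X ^ (k - 1)) e)) y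
              + r'.coeff 0 * d.B (d.ev (X ^ k) w) y = 0 := by
          intro y hy
          have h1 := h' _ hy
          rw [← ev_adj, ev_D, map_add, ← ev_mul, ← ev_mul, ← mul_assoc, ← mul_assoc, ← pow_add,
            Nat.sub_add_cancel (by omega), d.evN1, d.evN1, hk1, hNw', map_zero, add_zero,
            LinearMap.map_add d.D, LinearMap.map_add d.D, ← d.ev_D s'.divX, hDN, map_zero, add_zero,
            LinearMap.map_smul d.D, LinearMap.map_smul d.D, hDw (by omega)] at h1
          simpa using h1
        have g1 := gen e (heL _)
        have g2 := gen w' (hwL _)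
        rw [hDe (by omega), hNww, mul_zero, add_zero] at g2
        have s0 := (mul_eq_zero.mp g2).resolve_right hc
        rw [s0, zero_mul, zero_add, hNwe] at g1
        exact ⟨X_pow_succ_dvd s0, X_pow_succ_dvd ((mul_eq_zero.mp g1).resolve_right hc)⟩
    obtain ⟨⟨s', rfl⟩, ⟨r', rfl⟩⟩ := key k le_rfl
    refine ⟨s'.coeff 0, ?_⟩
    rw [d.evN hk, mul_comm, ev_mul, hNw', map_zero, add_zero]
  -- complement
  have hcomp : ∀ b g, (∀ y ∈ d.cyc e ⊔ d.cyc w', d.B (d.ev b (d.D e) + d.ev g w) y = 0) →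
      d.ev b (d.D e) + d.ev g w = 0 := by
    intro b g h
    have key : ∀ j, j ≤ k → (X ^ j : K[X]) ∣ b ∧ (X ^ (j + 1) : K[X]) ∣ g := by
      intro j
      induction j with
      | zero =>
        intro _
        refine ⟨by simp, ?_⟩
        have h1 := h (d.ev (X ^ k) e) (heL _)
        rw [← ev_adj, map_add, ← ev_mul, ← ev_mul, d.evN hk, d.evN hk, ev_D, hDN, smul_zero,
          zero_add, map_smul, LinearMap.smul_apply, hNwe] at h1
        rw [zero_add, pow_one, X_dvd_iff]
        exact (mul_eq_zero.mp h1).resolve_right hc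
      | succ j ih =>
        intro hj
        obtain ⟨⟨b', rfl⟩, ⟨g', rfl⟩⟩ := ih (by omega)
        have hk1 : k - 1 + 1 = k := by omega
        have hk2 : k - 1 - j + (j + 1) = k := by omega
        have gen : ∀ y, d.ev (X ^ (k - 1 - j)) y ∈ d.cyc e ⊔ d.cyc w' →
            b'.coeff 0 * d.B (d.D (d.ev (X ^ (k - 1)) e)) y
              + g'.coeff 0 * d.B (d.ev (X ^ k) w) y = 0 := by
          intro y hy
          have h1 := h _ hy
          rw [← ev_adj, map_add, ← ev_mul, ← ev_mul, ← mul_assoc, ← mul_assoc, ← pow_add,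
            ← pow_add, hk2, Nat.sub_add_cancel (by omega), d.evN1, d.evN hk, hk1,
            d.ev_D, d.ev_D, hDN, map_zero, add_zero] at h1
          simpa using h1
        have g1 := gen e (heL _)
        have g2 := gen w' (hwL _)
        rw [hDe (by omega), hNww, mul_zero, add_zero] at g2
        have s0 := (mul_eq_zero.mp g2).resolve_right hc
        rw [s0, zero_mul, zero_add, hNwe] at g1
        exact ⟨X_pow_succ_dvd s0, X_pow_succ_dvd ((mul_eq_zero.mp g1).resolve_right hc)⟩
    obtain ⟨⟨b', rfl⟩, ⟨g', rfl⟩⟩ := key k le_rfl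
    rw [ev_mul, ev_D, ev_D, hDN, ev_mul, hk, add_zero]
  have hdec : ∀ x ∈ d.cyc2 e ⊔ d.cyc2 w, ∃ l ∈ d.cyc e ⊔ d.cyc w', ∃ b g,
      x = l + (d.ev b (d.D e) + d.ev g w) := by
    intro x hx
    obtain ⟨u, hu, v, hv, rfl⟩ := Submodule.mem_sup.mp hx
    obtain ⟨_, ⟨a, rfl⟩, _, ⟨b, rfl⟩, rfl⟩ := Submodule.mem_sup.mp hu
    obtain ⟨_, ⟨g, rfl⟩, _, ⟨f, rfl⟩, rfl⟩ := Submodule.mem_sup.mp hv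
    refine ⟨d.ev a e + d.ev f w', Submodule.add_mem _ (heL _) (hwL _), b, g + f * (X * p'), ?_⟩
    rw [hw', map_add, ev_add, d.ev_mul f]
    have : ∀ A B' C' E F : V, A + B' + (C' + E) = A + (E + F) + (B' + (C' + F)) := by
      intro A B' C' E F
      have : A + (E + F) + (B' + (C' + F)) = A + B' + (C' + E) + (F + F) := by abel
      rw [this, vadd_self K, add_zero]
    exact this _ _ _ _ _
  have hmaxU : ∀ x ∈ d.cyc2 e ⊔ d.cyc2 w, (∀ y ∈ d.cyc e ⊔ d.cyc w', d.B x y = 0) →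
      x ∈ d.cyc e ⊔ d.cyc w' := by
    intro x hx h
    obtain ⟨l, hl, b, g, rfl⟩ := hdec x hx
    have := hcomp b g fun y hy => by
      have h1 := h y hy
      rwa [map_add, LinearMap.add_apply, hiso l hl y hy, zero_add] at h1
    rw [this, add_zero]; exact hl
  have hPU : ∀ x ∈ d.cyc2 e ⊔ d.cyc2 w, d.P x ∈ d.cyc2 e ⊔ d.cyc2 w :=
    d.P_mem_sup (d.P_mem_cyc2 _) (d.P_mem_cyc2 _)
  have hSU : ∀ x ∈ d.cyc2 e ⊔ d.cyc2 w, d.S x ∈ d.cyc2 e ⊔ d.cyc2 w :=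
    d.S_mem_sup (d.S_mem_cyc2 _) (d.S_mem_cyc2 _)
  have heU : ∀ r, d.ev r e ∈ d.cyc2 e ⊔ d.cyc2 w := fun r =>
    Submodule.mem_sup_left (Submodule.mem_sup_left ⟨r, rfl⟩)
  have hwU : ∀ r, d.ev r w ∈ d.cyc2 e ⊔ d.cyc2 w := fun r =>
    Submodule.mem_sup_right (Submodule.mem_sup_left ⟨r, rfl⟩)
  have hDwU : ∀ r, d.ev r (d.D w) ∈ d.cyc2 e ⊔ d.cyc2 w := fun r =>
    Submodule.mem_sup_right (Submodule.mem_sup_right ⟨r, rfl⟩)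
  have hLU : d.cyc e ⊔ d.cyc w' ≤ d.cyc2 e ⊔ d.cyc2 w := by
    refine sup_le ?_ ?_
    · rintro _ ⟨r, rfl⟩; exact heU r
    · rintro _ ⟨r, rfl⟩
      rw [hw', map_add, ← ev_mul]
      exact Submodule.add_mem _ (hDwU _) (hwU _)
  have hU : d.cyc2 e ⊔ d.cyc2 w = ⊤ := by
    refine (hind _ ⟨hPU, fun x hx => ?_⟩ ?_).resolve_left ?_
    · rw [Q_eq]; exact Submodule.add_mem _ (hSU x hx) (hPU x hx)
    · intro x hx h
      have hxL := hmaxU x hx fun y hy => h y (hLU hy)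
      obtain ⟨t, rfl⟩ := hrad x hxL fun y hy => by
        rw [← hsymP x hxL y hy]; exact h _ (hPU _ (hLU hy))
      have h1 := h (d.ev 1 w) (hwU _)
      rw [ev_one, map_smul, LinearMap.smul_apply] at h1
      rw [(mul_eq_zero.mp h1).resolve_right hc, zero_smul]
    · intro h
      have h1 := heU (X ^ k)
      rw [h] at h1
      exact he ((Submodule.mem_bot K).mp h1)
  refine ⟨d.cyc e ⊔ d.cyc w', hSL, hiso, fun x hx => hmaxU x (hU ▸ Submodule.mem_top) hx, ?_⟩
  intro x hx hPx
  obtain ⟨t, rfl⟩ := hrad x hx fun y hy => hiso _ hPx y hy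
  rw [map_smul, hP]

end nilp2

section main
variable {K : Type*} [Field K] [CharP K 2]

theorem fitting {V : Type*} [AddCommGroup V] [Module K V] [FiniteDimensional K V] (d : SD K V)
    (hind : d.Indec) (p : K[X]) :
    (∃ n, ∀ x, d.ev (p ^ n) x = 0) ∨ (∀ x, d.ev p x = 0 → x = 0) := by
  have hpow : ∀ n, (d.ev p : Module.End K V) ^ n = d.ev (p ^ n) := by
    intro n; simp [ev]
  obtain ⟨n, hn⟩ := Filter.eventually_atTop.mp
    (LinearMap.eventually_isCompl_ker_pow_range_pow (R := K) (M := V) (d.ev p))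
  have hc := hn (n + 1) (by omega)
  rw [hpow] at hc
  have hU := hind (LinearMap.ker (d.ev (p ^ (n + 1)))) ⟨?_, ?_⟩ ?_
  · rcases hU with h | h
    · right
      intro x hx
      have : x ∈ LinearMap.ker (d.ev (p ^ (n + 1))) := by
        rw [LinearMap.mem_ker, pow_succ, ev_mul, hx, map_zero]
      rw [h] at this
      exact (Submodule.mem_bot K).mp this
    · left
      refine ⟨n + 1, fun x => ?_⟩
      have : x ∈ LinearMap.ker (d.ev (p ^ (n + 1))) := h ▸ Submodule.mem_top
      exact this
  · intro x hx
    rw [LinearMap.mem_ker] at hx ⊢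
    rw [ev_P, hx, map_zero]
  · intro x hx
    rw [LinearMap.mem_ker] at hx ⊢
    rw [ev_Q, hx, map_zero]
  · intro x hx h
    refine d.nd x fun y => ?_
    have hy : y ∈ LinearMap.ker (d.ev (p ^ (n + 1))) ⊔ LinearMap.range (d.ev (p ^ (n + 1))) :=
      hc.sup_eq_top ▸ Submodule.mem_top
    obtain ⟨a, ha, _, ⟨b, rfl⟩, rfl⟩ := Submodule.mem_sup.mp hy
    rw [map_add, h a ha, zero_add, ← ev_adj, LinearMap.mem_ker.mp hx, map_zero]
    rfl

theorem least_pow {V : Type*} [AddCommGroup V] [Module K V] [Nontrivial V] (d : SD K V)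
    (q : K[X]) (h : ∃ n, ∀ x, d.ev (q ^ n) x = 0) :
    ∃ k, (∀ x, d.ev (q ^ (k + 1)) x = 0) ∧ ∃ x, d.ev (q ^ k) x ≠ 0 := by
  classical
  have h0 : Nat.find h ≠ 0 := by
    intro h0
    have := Nat.find_spec h
    rw [h0] at this
    obtain ⟨x, hx⟩ := exists_ne (0 : V)
    exact hx (by simpa [ev_one] using this x)
  obtain ⟨k, hk⟩ := Nat.exists_eq_succ_of_ne_zero h0
  refine ⟨k, fun x => ?_, ?_⟩
  · have := Nat.find_spec h x
    rwa [hk] at this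
  · have := Nat.find_min h (m := k) (by omega)
    push Not at this
    exact this

/-- polarization -/
theorem polar {V : Type*} [AddCommGroup V] [Module K V] (d : SD K V) (p : K[X])
    (h : ∀ e, d.B (d.ev p e) (d.P e) = 0) (x : V) : d.ev p (d.S x) = 0 := by
  refine d.nd _ fun y => ?_
  have h1 := h (x + y)
  simp only [map_add, LinearMap.add_apply, h, zero_add, add_zero] at h1
  rw [S_apply, map_add, map_add, LinearMap.add_apply, ev_P, d.adj, ev_Q, d.adj']
  rwa [d.ev_adj p y, d.ev_P, d.symm y, d.adj] at h1

theorem indec_good {V : Type*} [AddCommGroup V] [Module K V] [FiniteDimensional K V]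
    [Nontrivial V] (d : SD K V) (hind : d.Indec) : ∃ L, d.Good L := by
  rcases d.fitting hind X with hnil | hinj
  · obtain ⟨k, hk, e, he⟩ := d.least_pow X hnil
    by_cases h1 : ∃ e, d.B (d.ev (X ^ k) e) (d.P e) ≠ 0
    · obtain ⟨e, he⟩ := h1
      exact d.case_one hind X irreducible_X k hk e he
    push Not at h1
    by_cases h2 : ∃ e, d.P (d.ev (X ^ k) e) ≠ d.ev (X ^ k) e
    · obtain ⟨e, he⟩ := h2
      exact d.case_b hind k hk h1 e he
    push Not at h2
    exact d.case_a hind k hk h2 e he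
  · have hint : IsIntegral K (d.S : Module.End K V) := Algebra.IsIntegral.isIntegral _
    have hm0 : minpoly K (d.S : Module.End K V) ≠ 0 := minpoly.ne_zero hint
    obtain ⟨q, hq, r, hr⟩ := WfDvdMonoid.exists_irreducible_factor
      (minpoly.not_isUnit K (d.S : Module.End K V)) hm0
    have hqnil := (d.fitting hind q).resolve_right (by
      intro hq'
      have hr0 : r ≠ 0 := by rintro rfl; simp [hr] at hm0
      have : aeval (d.S : Module.End K V) r = 0 := by
        ext x
        refine hq' _ ?_
        change d.ev q (d.ev r x) = 0
        rw [← ev_mul, ← hr, ev, minpoly.aeval]; rfl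
      have h3 := minpoly.degree_le_of_ne_zero K (d.S : Module.End K V) hr0 this
      rw [hr, degree_mul] at h3
      have h4 : 0 < q.degree := hq.degree_pos
      rw [degree_eq_natDegree hr0, degree_eq_natDegree hq.ne_zero] at h3
      rw [degree_eq_natDegree hq.ne_zero] at h4
      norm_cast at h3 h4
      omega)
    obtain ⟨k, hk, x, hx⟩ := d.least_pow q hqnil
    by_cases h1 : ∃ e, d.B (d.ev (q ^ k) e) (d.P e) ≠ 0
    · obtain ⟨e, he⟩ := h1
      exact d.case_one hind q hq k hk e he
    push Not at h1
    exfalso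
    apply hx
    apply hinj
    rw [ev_comm, ev_X]
    exact d.polar _ h1 x

end main

section final
variable {K : Type*} [Field K] [CharP K 2]

/-- restriction to an invariant nondegenerate subspace -/
def restr {V : Type*} [AddCommGroup V] [Module K V] (d : SD K V) (U : Submodule K V)
    (hi : d.Inv U) (hn : d.ND U) : SD K U where
  B := d.B.domRestrict₁₂ U U
  P := d.P.restrict hi.1
  Q := d.Q.restrict hi.2
  alt x := d.alt x
  nd x h := Subtype.ext (hn x x.2 fun y hy => h ⟨y, hy⟩)
  adj x y := d.adj x y
  PQ x := Subtype.ext (d.PQ x)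
  QP x := Subtype.ext (d.QP x)

theorem restr_B {V : Type*} [AddCommGroup V] [Module K V] (d : SD K V) (U : Submodule K V)
    (hi : d.Inv U) (hn : d.ND U) (x y : U) : (d.restr U hi hn).B x y = d.B x y := rfl
theorem restr_P {V : Type*} [AddCommGroup V] [Module K V] (d : SD K V) (U : Submodule K V)
    (hi : d.Inv U) (hn : d.ND U) (x : U) : (((d.restr U hi hn).P x : U) : V) = d.P x := rfl
theorem restr_S {V : Type*} [AddCommGroup V] [Module K V] (d : SD K V) (U : Submodule K V)
    (hi : d.Inv U) (hn : d.ND U) (x : U) : (((d.restr U hi hn).S x : U) : V) = d.S x := rfl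

/-- orthogonal complement -/
def orth {V : Type*} [AddCommGroup V] [Module K V] (d : SD K V) (U : Submodule K V) :
    Submodule K V where
  carrier := {x | ∀ u ∈ U, d.B x u = 0}
  add_mem' := by
    intro a b ha hb u hu
    rw [map_add, LinearMap.add_apply, ha u hu, hb u hu, add_zero]
  zero_mem' := by intro u _; simp
  smul_mem' := by
    intro c a ha u hu
    rw [map_smul, LinearMap.smul_apply, ha u hu, smul_zero]

theorem combine {V : Type*} [AddCommGroup V] [Module K V] (d : SD K V) (U W : Submodule K V)
    (hi : d.Inv U) (hn : d.ND U) (hi' : d.Inv W) (hn' : d.ND W)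
    (hUW : ∀ u ∈ U, ∀ w ∈ W, d.B u w = 0) (hc : IsCompl U W)
    (L1 : Submodule K U) (h1 : (d.restr U hi hn).Good L1)
    (L2 : Submodule K W) (h2 : (d.restr W hi' hn').Good L2) : ∃ L, d.Good L := by
  have hWU : ∀ w ∈ W, ∀ u ∈ U, d.B w u = 0 := fun w hw u hu => by rw [d.symm, hUW u hu w hw]
  have hmem : ∀ x, x ∈ L1.map U.subtype ⊔ L2.map W.subtype ↔
      ∃ a ∈ L1, ∃ b ∈ L2, x = (a : V) + (b : V) := by
    intro x
    rw [Submodule.mem_sup]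
    constructor
    · rintro ⟨_, ⟨a, ha, rfl⟩, _, ⟨b, hb, rfl⟩, rfl⟩; exact ⟨a, ha, b, hb, rfl⟩
    · rintro ⟨a, ha, b, hb, rfl⟩; exact ⟨_, ⟨a, ha, rfl⟩, _, ⟨b, hb, rfl⟩, rfl⟩
  refine ⟨L1.map U.subtype ⊔ L2.map W.subtype, ?_, ?_, ?_, ?_⟩
  · intro x hx
    obtain ⟨a, ha, b, hb, rfl⟩ := (hmem x).mp hx
    rw [hmem]
    exact ⟨_, h1.sinv a ha, _, h2.sinv b hb, by rw [restr_S, restr_S, map_add]⟩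
  · intro x hx y hy
    obtain ⟨a, ha, b, hb, rfl⟩ := (hmem x).mp hx
    obtain ⟨a', ha', b', hb', rfl⟩ := (hmem y).mp hy
    have e1 := h1.iso a ha a' ha'
    have e2 := h2.iso b hb b' hb'
    rw [restr_B] at e1 e2
    simp only [map_add, LinearMap.add_apply, e1, e2, hUW a a.2 b' b'.2, hWU b b.2 a' a'.2,
      add_zero]
  · intro x hx
    have hx' : x ∈ U ⊔ W := hc.sup_eq_top ▸ Submodule.mem_top
    obtain ⟨u, hu, w, hw, rfl⟩ := Submodule.mem_sup.mp hx'
    rw [hmem]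
    refine ⟨⟨u, hu⟩, h1.max _ fun y hy => ?_, ⟨w, hw⟩, h2.max _ fun y hy => ?_, rfl⟩
    · have := hx y ((hmem _).mpr ⟨y, hy, 0, L2.zero_mem, by simp⟩)
      rw [map_add, LinearMap.add_apply, hWU w hw y y.2, add_zero] at this
      exact this
    · have := hx y ((hmem _).mpr ⟨0, L1.zero_mem, y, hy, by simp⟩)
      rw [map_add, LinearMap.add_apply, hUW u hu y y.2, zero_add] at this
      exact this
  · intro x hx hPx
    obtain ⟨a, ha, b, hb, rfl⟩ := (hmem x).mp hx
    obtain ⟨a', ha', b', hb', hab⟩ := (hmem _).mp hPx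
    rw [map_add] at hab
    have key : d.P a - a' = b' - d.P b := by
      rw [sub_eq_sub_iff_add_eq_add, hab, add_comm]
    have hz : d.P a - (a' : V) = 0 := by
      have m1 : d.P a - (a' : V) ∈ U := U.sub_mem (hi.1 _ a.2) a'.2
      have m2 : d.P a - (a' : V) ∈ W := key ▸ W.sub_mem b'.2 (hi'.1 _ b.2)
      exact Submodule.disjoint_def.mp hc.disjoint _ m1 m2
    have ea : (d.restr U hi hn).P a = a' := Subtype.ext (sub_eq_zero.mp hz)
    have eb : (d.restr W hi' hn').P b = b' := Subtype.ext (sub_eq_zero.mp (key ▸ hz)).symm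
    have fa := h1.good a ha (ea ▸ ha')
    have fb := h2.good b hb (eb ▸ hb')
    rw [map_add, ← restr_P d U hi hn, ← restr_P d W hi' hn', fa, fb]

theorem exists_good (n : ℕ) : ∀ (V : Type _) [AddCommGroup V] [Module K V]
    [FiniteDimensional K V] (d : SD K V), Module.finrank K V = n → ∃ L, d.Good L := by
  induction n using Nat.strong_induction_on with
  | _ n ih =>
  intro V _ _ _ d hV
  rcases subsingleton_or_nontrivial V with hs | hs
  · exact ⟨⊤, fun _ _ => Submodule.mem_top, fun x _ y _ => by rw [Subsingleton.elim x 0]; simp,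
      fun _ _ => Submodule.mem_top, fun _ _ _ => Subsingleton.elim _ _⟩
  by_cases hind : d.Indec
  · exact d.indec_good hind
  unfold Indec at hind
  push Not at hind
  obtain ⟨U, hi, hn, hb, ht⟩ := hind
  have hUlt : Module.finrank K U < n := hV ▸ Submodule.finrank_lt ht
  have hdis : ∀ x ∈ U, x ∈ d.orth U → x = 0 := fun x hx hx' => hn x hx hx'
  have hsup : ∀ x, ∃ u ∈ U, ∃ w ∈ d.orth U, x = u + w := by
    intro x
    obtain ⟨u0, hu0⟩ := (d.restr U hi hn).repr_functional ((d.B x).comp U.subtype)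
    refine ⟨u0, u0.2, x - u0, ?_, by abel⟩
    intro u hu
    have := hu0 ⟨u, hu⟩
    rw [restr_B] at this
    rw [map_sub, LinearMap.sub_apply, d.symm u0, this]
    exact sub_self _
  have hWlt : Module.finrank K (d.orth U) < n := by
    rw [← hV]
    refine Submodule.finrank_lt fun h => hb ?_
    rw [eq_bot_iff]
    intro x hx
    exact hdis x hx (h ▸ Submodule.mem_top)
  have hi' : d.Inv (d.orth U) := by
    refine ⟨fun x hx u hu => ?_, fun x hx u hu => ?_⟩
    · rw [d.adj]; exact hx _ (hi.2 u hu)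
    · rw [d.adj']; exact hx _ (hi.1 u hu)
  have hn' : d.ND (d.orth U) := by
    intro x hx h
    refine d.nd x fun y => ?_
    obtain ⟨u, hu, w, hw, rfl⟩ := hsup y
    rw [map_add, hx u hu, h w hw, add_zero]
  have hc : IsCompl U (d.orth U) := by
    refine ⟨Submodule.disjoint_def.mpr hdis, codisjoint_iff.mpr (eq_top_iff.mpr ?_)⟩
    intro x _
    obtain ⟨u, hu, w, hw, rfl⟩ := hsup x
    exact Submodule.add_mem_sup hu hw
  obtain ⟨L1, h1⟩ := ih _ hUlt U (d.restr U hi hn) rfl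
  obtain ⟨L2, h2⟩ := ih _ hWlt (d.orth U) (d.restr _ hi' hn') rfl
  exact d.combine U _ hi hn hi' hn' (fun u hu w hw => by rw [d.symm]; exact hw u hu) hc L1 h1 L2 h2

theorem exists_compl {V : Type*} [AddCommGroup V] [Module K V] [FiniteDimensional K V]
    (d : SD K V) (L M0 : Submodule K V)
    (hLm : ∀ x, (∀ y ∈ L, d.B x y = 0) → x ∈ L)
    (hM0 : ∀ x ∈ M0, ∀ y ∈ M0, d.B x y = 0) (hd : ∀ x ∈ M0, x ∈ L → x = 0) :
    ∃ M, M0 ≤ M ∧ (∀ x ∈ M, ∀ y ∈ M, d.B x y = 0) ∧ IsCompl L M := by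
  obtain ⟨M, ⟨hM1, hM2, hM3⟩, hmax⟩ := (wellFounded_gt (α := Submodule K V)).has_min
    {M | M0 ≤ M ∧ (∀ x ∈ M, ∀ y ∈ M, d.B x y = 0) ∧ (∀ x ∈ M, x ∈ L → x = 0)}
    ⟨M0, le_rfl, hM0, hd⟩
  have hperp : ∀ v, (∀ y ∈ M, d.B v y = 0) → v ∈ L ⊔ M := by
    intro v hv
    by_contra hvn
    have hvM : v ∉ M := fun h => hvn (Submodule.mem_sup_right h)
    refine hmax (M ⊔ K ∙ v) ⟨hM1.trans le_sup_left, ?_, ?_⟩ ?_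
    · intro x hx y hy
      obtain ⟨m, hm, _, hs, rfl⟩ := Submodule.mem_sup.mp hx
      obtain ⟨s, rfl⟩ := Submodule.mem_span_singleton.mp hs
      obtain ⟨m', hm', _, hs', rfl⟩ := Submodule.mem_sup.mp hy
      obtain ⟨s', rfl⟩ := Submodule.mem_span_singleton.mp hs'
      simp [hM2 m hm m' hm', hv m' hm', d.symm m v, hv m hm, d.alt]
    · intro x hx hxL
      obtain ⟨m, hm, _, hs, rfl⟩ := Submodule.mem_sup.mp hx
      obtain ⟨s, rfl⟩ := Submodule.mem_span_singleton.mp hs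
      by_cases hs0 : s = 0
      · subst hs0
        rw [zero_smul, add_zero] at hxL ⊢
        exact hM3 m hm hxL
      · exfalso
        apply hvn
        have : v = s⁻¹ • (m + s • v) + (-s⁻¹) • m := by
          rw [smul_add, smul_smul, inv_mul_cancel₀ hs0, one_smul, neg_smul]; abel
        rw [this]
        exact Submodule.add_mem_sup (L.smul_mem _ hxL) (M.smul_mem _ hm)
    · refine lt_of_le_of_ne le_sup_left fun h => hvM ?_
      rw [h]
      exact Submodule.mem_sup_right (Submodule.mem_span_singleton_self v)
  refine ⟨M, hM1, hM2, Submodule.disjoint_def.mpr fun x h1 h2 => hM3 x h2 h1,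
    codisjoint_iff.mpr ?_⟩
  by_contra hne
  obtain ⟨y, hy⟩ : ∃ y, y ∉ L ⊔ M := by
    by_contra h; push Not at h; exact hne (eq_top_iff.mpr fun x _ => h x)
  obtain ⟨z, hz, hyz⟩ := d.exists_orth _ y hy
  have hzL : z ∈ L := hLm z fun a ha => by rw [d.symm]; exact hz a (Submodule.mem_sup_left ha)
  have hzM : z ∈ M := by
    by_contra hzM
    obtain ⟨w, hw, hzw⟩ := d.exists_orth M z hzM
    apply hzw
    rw [d.symm]
    exact hz w (hperp w fun a ha => by rw [d.symm]; exact hw a ha)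
  rw [hM3 z hzM hzL, map_zero] at hyz
  exact hyz rfl

theorem exists_basis {V : Type*} [AddCommGroup V] [Module K V] [FiniteDimensional K V]
    (d : SD K V) (n : ℕ) (hV : Module.finrank K V = n + n) :
    ∃ e f : Fin n → V, (∀ i j, d.B (e i) (e j) = 0) ∧ (∀ i j, d.B (f i) (f j) = 0) ∧
      (∀ i j, d.B (e i) (f j) = if i = j then 1 else 0) ∧
      (∀ i j, d.B (d.P (e i)) (f j) = if i = j then 1 else 0) := by
  obtain ⟨L, hL⟩ := exists_good _ V d rfl
  have hPP : ∀ x y, d.B (d.P x) (d.P y) = d.B x y := fun x y => by rw [d.adj, d.QP]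
  obtain ⟨M, hDM, hM, hc⟩ := d.exists_compl L (L.map d.D) hL.max (by
    rintro _ ⟨x, hx, rfl⟩ _ ⟨y, hy, rfl⟩
    have h1 := hL.iso _ (hL.sinv x hx) y hy
    rw [S_apply, map_add, LinearMap.add_apply, d.adj'] at h1
    simp only [D_apply, map_add, LinearMap.add_apply, hPP, hL.iso x hx y hy, zero_add, add_zero]
    rw [add_comm]
    exact h1) (by
    rintro _ ⟨x, hx, rfl⟩ h
    have h1 : d.P x ∈ L := by rw [P_eq]; exact L.add_mem h hx
    rw [D_apply, hL.good x hx h1, vadd_self K])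
  have hsum := Submodule.finrank_add_eq_of_isCompl hc
  have hdis := Submodule.disjoint_def.mp hc.disjoint
  have hspan : ∀ x, ∃ l ∈ L, ∃ m ∈ M, l + m = x := by
    intro x
    have : x ∈ L ⊔ M := hc.sup_eq_top ▸ Submodule.mem_top
    exact Submodule.mem_sup.mp this
  have hinjgen : ∀ A A' : Submodule K V, (∀ x ∈ A, (∀ y ∈ A', d.B x y = 0) → x = 0) →
      Module.finrank K A ≤ Module.finrank K A' := by
    intro A A' h
    rw [← Subspace.dual_finrank_eq (K := K) (V := A')]
    refine LinearMap.finrank_le_finrank_of_injective (f := d.B.domRestrict₁₂ A A') ?_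
    rw [← LinearMap.ker_eq_bot, LinearMap.ker_eq_bot']
    intro x hx
    refine Subtype.ext (h x x.2 fun y hy => ?_)
    exact LinearMap.congr_fun hx ⟨y, hy⟩
  have hLM0 : ∀ x ∈ L, (∀ y ∈ M, d.B x y = 0) → x = 0 := by
    intro x hx h
    refine d.nd x fun y => ?_
    obtain ⟨l, hl, m, hm, rfl⟩ := hspan y
    rw [map_add, hL.iso x hx l hl, h m hm, add_zero]
  have le1 := hinjgen L M hLM0
  have le2 := hinjgen M L fun x hx h => hdis x (hL.max x h) hx
  have hLn : Module.finrank K L = n := by omega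
  let b := Module.finBasisOfFinrankEq K L hLn
  let φ : Fin n → V →ₗ[K] K := fun j => (b.coord j).comp (L.projectionOnto M hc)
  have hφM : ∀ j, ∀ x ∈ M, φ j x = 0 := by
    intro j x hx
    have : L.projectionOnto M hc x = 0 := by
      rw [Submodule.projectionOnto_apply_eq_zero_iff]; exact hx
    simp [φ, this]
  have hφL : ∀ i j, φ j (b i) = if i = j then 1 else 0 := by
    intro i j
    simp [φ, Finsupp.single_apply]
  choose f hf using fun j => d.repr_functional (φ j)
  have hfM : ∀ j, f j ∈ M := by
    intro j
    obtain ⟨l, hl, m, hm, hlm⟩ := hspan (f j)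
    have : l = 0 := by
      refine hLM0 l hl fun y hy => ?_
      have h1 := hf j y
      rw [hφM j y hy, d.symm, ← hlm, map_add, LinearMap.add_apply, hM m hm y hy, add_zero] at h1
      exact h1
    rw [← hlm, this, zero_add]; exact hm
  refine ⟨fun i => b i, f, fun i j => hL.iso _ (b i).2 _ (b j).2,
    fun i j => hM _ (hfM i) _ (hfM j), fun i j => ?_, fun i j => ?_⟩
  · rw [hf, hφL]
  · rw [P_eq, hf, map_add, hφL, hφM j _ (hDM ⟨_, (b i).2, rfl⟩), zero_add]

end final

end SD

section matrix
variable {K : Type*} [Field K] [CharP K 2] {n : ℕ}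

theorem sympJ_char_two : sympJ n K = Matrix.fromBlocks 0 1 1 0 := by
  have : (-1 : Matrix (Fin n) (Fin n) K) = 1 := by
    ext i j
    rw [Matrix.neg_apply, CharTwo.neg_eq]
  rw [sympJ, this]

theorem sympJ_mul_self : sympJ n K * sympJ n K = 1 := by
  rw [sympJ_char_two, Matrix.fromBlocks_multiply]; simp

theorem sympJ_transpose : (sympJ n K)ᵀ = sympJ n K := by
  rw [sympJ_char_two, Matrix.fromBlocks_transpose]; simp

theorem sympJ_alt (x : Fin n ⊕ Fin n → K) : x ⬝ᵥ (sympJ n K *ᵥ x) = 0 := by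
  rw [sympJ_char_two, Matrix.fromBlocks_mulVec]
  simp only [dotProduct, Fintype.sum_sum_type]
  simp [mul_comm, CharTwo.add_self_eq_zero]

/-- The symplectic space attached to a symplectic matrix. -/
def matSD (P : Matrix (Fin n ⊕ Fin n) (Fin n ⊕ Fin n) K) (hP : IsSymplectic P) :
    SD K (Fin n ⊕ Fin n → K) where
  B := Matrix.toLinearMap₂' K (sympJ n K)
  P := Matrix.vecMulLinear P
  Q := Matrix.vecMulLinear (sympJ n K * Pᵀ * sympJ n K)
  alt x := by rw [Matrix.toLinearMap₂'_apply']; exact sympJ_alt x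
  nd x h := by
    have h1 : x ᵥ* sympJ n K = 0 := by
      refine dotProduct_eq_zero _ fun y => ?_
      have := h y
      rwa [Matrix.toLinearMap₂'_apply', Matrix.dotProduct_mulVec] at this
    have h2 : (x ᵥ* sympJ n K) ᵥ* sympJ n K = 0 := by rw [h1, Matrix.zero_vecMul]
    rwa [Matrix.vecMul_vecMul, sympJ_mul_self, Matrix.vecMul_one] at h2
  adj x y := by
    rw [Matrix.toLinearMap₂'_apply', Matrix.toLinearMap₂'_apply', Matrix.vecMulLinear_apply,
      Matrix.vecMulLinear_apply, ← Matrix.mulVec_transpose _ y, ← Matrix.dotProduct_mulVec,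
      Matrix.mulVec_mulVec, Matrix.mulVec_mulVec]
    simp only [Matrix.transpose_mul, Matrix.transpose_transpose, sympJ_transpose]
    rw [← Matrix.mul_assoc, sympJ_mul_self, Matrix.one_mul]
  PQ x := by
    rw [Matrix.vecMulLinear_apply, Matrix.vecMulLinear_apply, Matrix.vecMul_vecMul]
    have h1 : P * (sympJ n K * Pᵀ * sympJ n K) = 1 := by
      rw [← Matrix.mul_assoc, ← Matrix.mul_assoc, hP, sympJ_mul_self]
    rw [mul_eq_one_comm.mp h1, Matrix.vecMul_one]
  QP x := by
    rw [Matrix.vecMulLinear_apply, Matrix.vecMulLinear_apply, Matrix.vecMul_vecMul]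
    have h1 : P * (sympJ n K * Pᵀ * sympJ n K) = 1 := by
      rw [← Matrix.mul_assoc, ← Matrix.mul_assoc, hP, sympJ_mul_self]
    rw [h1, Matrix.vecMul_one]

theorem symp_gram_apply (A C : Matrix (Fin n ⊕ Fin n) (Fin n ⊕ Fin n) K) (a b : Fin n ⊕ Fin n) :
    (A * sympJ n K * Cᵀ) a b = Matrix.toLinearMap₂' K (sympJ n K) (A a) (C b) := by
  rw [Matrix.toLinearMap₂'_apply', Matrix.dotProduct_mulVec]
  rfl

end matrix

theorem principal_corner_identity_char_two {K : Type*} [Field K] [CharP K 2] {n : ℕ}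
    (hn : 2 ≤ n)
    (P : Matrix (Fin n ⊕ Fin n) (Fin n ⊕ Fin n) K) (hP : IsSymplectic P)
    (hns : ∀ c : K, P ≠ c • (1 : Matrix (Fin n ⊕ Fin n) (Fin n ⊕ Fin n) K)) :
    ∃ Q : Matrix (Fin n ⊕ Fin n) (Fin n ⊕ Fin n) K, IsSymplectic Q ∧
      (Q * P * Q⁻¹).toBlocks₁₁ = (1 : Matrix (Fin n) (Fin n) K) := by
  obtain ⟨e, f, hee, hff, hef, hPef⟩ := (matSD P hP).exists_basis n (by simp)
  let Q : Matrix (Fin n ⊕ Fin n) (Fin n ⊕ Fin n) K := Matrix.of (Sum.elim e f)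
  have hQ : IsSymplectic Q := by
    unfold IsSymplectic
    ext a b
    have hg : (Q * sympJ n K * Qᵀ) a b = (matSD P hP).B (Sum.elim e f a) (Sum.elim e f b) :=
      symp_gram_apply Q Q a b
    rw [hg, sympJ_char_two]
    rcases a with i | i <;> rcases b with j | j
    · rw [Sum.elim_inl, Sum.elim_inl, hee, Matrix.fromBlocks_apply₁₁, Matrix.zero_apply]
    · rw [Sum.elim_inl, Sum.elim_inr, hef, Matrix.fromBlocks_apply₁₂, Matrix.one_apply]
    · rw [Sum.elim_inl, Sum.elim_inr, (matSD P hP).symm, hef, Matrix.fromBlocks_apply₂₁,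
        Matrix.one_apply]
      simp only [eq_comm]
    · rw [Sum.elim_inr, Sum.elim_inr, hff, Matrix.fromBlocks_apply₂₂, Matrix.zero_apply]
  refine ⟨Q, hQ, ?_⟩
  have hinv : Q⁻¹ = sympJ n K * Qᵀ * sympJ n K := by
    refine Matrix.inv_eq_right_inv ?_
    rw [← Matrix.mul_assoc, ← Matrix.mul_assoc, hQ, sympJ_mul_self]
  have hX : Q * P * Q⁻¹ = ((Q * P) * sympJ n K * Qᵀ) * sympJ n K := by
    rw [hinv]; simp only [Matrix.mul_assoc]
  have hX2 : ((Q * P) * sympJ n K * Qᵀ).toBlocks₁₂ = 1 := by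
    ext i j
    have hg : ((Q * P) * sympJ n K * Qᵀ) (Sum.inl i) (Sum.inr j)
        = (matSD P hP).B ((matSD P hP).P (e i)) (f j) :=
      symp_gram_apply (Q * P) Q (Sum.inl i) (Sum.inr j)
    rw [Matrix.toBlocks₁₂, Matrix.of_apply, hg, Matrix.one_apply, hPef]
  rw [hX, ← Matrix.fromBlocks_toBlocks ((Q * P) * sympJ n K * Qᵀ), hX2, sympJ_char_two,
    Matrix.fromBlocks_multiply]
  simp
end
end
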